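/- Let m be a positive half-odd integer (2m an odd positive integer). For τ in the upper half-plane and z1, z2 ∈ ℂ such that neither 2z1 nor 2z2 lies in ℤ + ℤ·(2τ), the following identity holds: θ^{(−)}_{−2m,2m+1}(τ, 2m(z1−z2)/(2m+1)) · Φ^{[m,0]}(2τ, 2z1, 2z2, 0) = −i η(2τ)³ { θ^{(−)}_{2m,2m+1}(τ, (z1−z2)/(2m+1) + z1+z2) / ϑ_{11}(2τ, 2z1) + θ^{(−)}_{2m,2m+1}(τ, (z1−z2)/(2m+1) − z1−z2) / ϑ_{11}(2τ, 2z2) } − q^{−m/(2(2m+1))} e^{2πim(z1−z2)/(2m+1)} Σ_{j=1}^∞ Σ_{r=1}^{j} Σ_{k even, 0≤k≤2m−1} (−1)^j q^{(2m+1)j² − (4m(j−r)+2m−k)²/(8m)} { e^{πi(4mr−2m+k)(z1−z2)} q^{−(4mr−2m+k)/2} + e^{−πi(4mr−2m+k)(z1−z2)} q^{(4mr−2m+k)/2} } [θ_{k,2m} − θ_{−k,2m}](τ, z1+z2) + q^{−m/(2(2m+1))} e^{2πim(z1−z2)/(2m+1)} Σ_{j=1}^∞ Σ_{r=0}^{j−1}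 Σ_{k even, 0≤k≤2m−1} (−1)^j q^{(2m+1)j² − (4m(j−r)−2m+k)²/(8m)} { e^{πi(4mr+2m−k)(z1−z2)} q^{−(4mr+2m−k)/2} + e^{−πi(4mr+2m−k)(z1−z2)} q^{(4mr+2m−k)/2} } [θ_{k,2m} − θ_{−k,2m}](τ, z1+z2) + θ^{(−)}_{−2m,2m+1}(τ, 2m(z1−z2)/(2m+1)) · Σ_{k=1}^{m−1/2} e^{2πik(z1−z2)} q^{−k²/(2m)} [θ_{k,m} − θ_{−k,m}](2τ, 2z1+2z2), where in the last sum k runs over the integers 1, …, m−1/2. -/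

import Mathlib

open Complex

noncomputable section

namespace Wakimoto

/-- `qpow τ x = e^{2πiτx}`, i.e. `q^x` where `q = e^{2πiτ}`. -/
def qpow (τ x : ℂ) : ℂ := Complex.exp (2 * Real.pi * Complex.I * τ * x)

/-- `e2 z = e^{2πiz}`. -/
def e2 (z : ℂ) : ℂ := Complex.exp (2 * Real.pi * Complex.I * z)

/-- The mock theta function `Φ^{[m,s]}_1`. -/
def Phi1 (m s : ℂ) (τ z1 z2 t : ℂ) : ℂ :=
  Complex.exp (-(2 * Real.pi * Complex.I) * m * t) *
    ∑' j : ℤ,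
      Complex.exp (2 * Real.pi * Complex.I * (m * (j : ℂ) * (z1 + z2) + s * z1)) *
          qpow τ (m * (j : ℂ) ^ 2 + s * (j : ℂ)) /
        (1 - e2 z1 * qpow τ (j : ℂ))

/-- The mock theta function `Φ^{[m,s]}_2`. -/
def Phi2 (m s : ℂ) (τ z1 z2 t : ℂ) : ℂ :=
  Complex.exp (-(2 * Real.pi * Complex.I) * m * t) *
    ∑' j : ℤ,
      Complex.exp (-(2 * Real.pi * Complex.I) * (m * (j : ℂ) * (z1 + z2) + s * z2)) *
          qpow τ (m * (j : ℂ) ^ 2 + s * (j : ℂ)) /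
        (1 - e2 (-z2) * qpow τ (j : ℂ))

/-- `Φ^{[m,s]} = Φ^{[m,s]}_1 - Φ^{[m,s]}_2`. -/
def Phi (m s : ℂ) (τ z1 z2 t : ℂ) : ℂ :=
  Phi1 m s τ z1 z2 t - Phi2 m s τ z1 z2 t

/-- Jacobi's theta function `θ_{k,m}`. -/
def jTheta (k m : ℂ) (τ z : ℂ) : ℂ :=
  ∑' j : ℤ,
    Complex.exp (2 * Real.pi * Complex.I * (m * ((j : ℂ) + k / (2 * m)) * z)) *
      qpow τ (m * ((j : ℂ) + k / (2 * m)) ^ 2)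

/-- The signed theta function `θ^{(-)}_{k,m}`. -/
def jThetaM (k m : ℂ) (τ z : ℂ) : ℂ :=
  ∑' j : ℤ,
    (-1 : ℂ) ^ j *
      Complex.exp (2 * Real.pi * Complex.I * (m * ((j : ℂ) + k / (2 * m)) * z)) *
      qpow τ (m * ((j : ℂ) + k / (2 * m)) ^ 2)

/-- The Dedekind eta function. -/
def eta (τ : ℂ) : ℂ := qpow τ (1 / 24) * ∏' n : ℕ, (1 - qpow τ ((n : ℂ) + 1))

/-- The Mumford theta functions `ϑ_{ab}`. -/
def mumford (a b : ℕ) (τ z : ℂ) : ℂ :=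
  ∑' n : ℤ,
    Complex.exp (Real.pi * Complex.I * τ * ((n : ℂ) + (a : ℂ) / 2) ^ 2 +
      2 * Real.pi * Complex.I * ((n : ℂ) + (a : ℂ) / 2) * (z + (b : ℂ) / 2))

/-- `z` lies in the lattice `ℤ + ℤτ`. -/
def InLattice (τ z : ℂ) : Prop := ∃ a b : ℤ, z = (a : ℂ) + (b : ℂ) * τ

section Helpers

open Filter Topology

/-- Gaussian binomials. -/
def gb (p : ℂ) : ℕ → ℕ → ℂ
  | _, 0 => 1
  | 0, (_+1) => 0
  | (n+1), (k+1) => gb p n k + p^(k+1) * gb p n (k+1)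

def PP (p : ℂ) (n : ℕ) : ℂ := ∏ i ∈ Finset.range n, (1 - p^(i+1))

lemma gb_zero_right (p : ℂ) (n : ℕ) : gb p n 0 = 1 := by cases n <;> simp [gb]

lemma gb_gt (p : ℂ) (n k : ℕ) (h : n < k) : gb p n k = 0 := by
  induction n generalizing k with
  | zero => obtain ⟨k, rfl⟩ := Nat.exists_eq_succ_of_ne_zero (by omega : k ≠ 0); simp [gb]
  | succ n ih =>
    obtain ⟨k, rfl⟩ := Nat.exists_eq_succ_of_ne_zero (by omega : k ≠ 0)
    simp [gb, ih k (by omega), ih (k+1) (by omega)]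

lemma PP_succ (p : ℂ) (n : ℕ) : PP p (n+1) = PP p n * (1 - p^(n+1)) := by
  simp [PP, Finset.prod_range_succ]

lemma gb_mul (p : ℂ) (a b : ℕ) : gb p (a+b) a * (PP p a * PP p b) = PP p (a+b) := by
  induction h : a + b generalizing a b with
  | zero => obtain ⟨rfl, rfl⟩ : a = 0 ∧ b = 0 := by omega
            simp [gb, PP]
  | succ n ih =>
    rcases a with _ | a
    · obtain rfl : b = n+1 := by omega
      simp [gb, PP]
    rcases b with _ | b
    · obtain rfl : a = n := by omega
      have := ih a 0 (by omega)
      rw [gb, gb_gt p a (a+1) (by omega), PP_succ]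
      linear_combination (1 - p^(a+1)) * this
    · obtain rfl : n = a + b + 1 := by omega
      have h1 := ih a (b+1) (by omega)
      have h2 := ih (a+1) b (by omega)
      rw [gb, PP_succ p (a+b+1)]
      rw [PP_succ p b] at *
      rw [PP_succ p a] at *
      have : p^(a+b+1+1) = p^(a+1)*p^(b+1) := by ring
      rw [this]
      linear_combination (1 - p^(a+1)) * h1 + p^(a+1) * (1-p^(b+1)) * h2

lemma sum_gb_succ (p : ℂ) (n : ℕ) (F : ℕ → ℂ) :
    ∑ j ∈ Finset.range (n+2), gb p (n+1) j * F j =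
      ∑ j ∈ Finset.range (n+1), gb p n j * F (j+1) +
      ∑ j ∈ Finset.range (n+1), gb p n j * (p^j * F j) := by
  rw [Finset.sum_range_succ' _ (n+1)]
  have h2 : ∑ j ∈ Finset.range (n+1), gb p n j * (p^j * F j)
     = ∑ j ∈ Finset.range (n+1), gb p n (j+1) * (p^(j+1) * F (j+1)) + gb p n 0 * (p^0 * F 0) := by
    rw [← Finset.sum_range_succ' (fun j => gb p n j * (p^j * F j)), Finset.sum_range_succ _ (n+1)]
    rw [gb_gt p n (n+1) (by omega)]; ring
  rw [h2, gb_zero_right, gb_zero_right, ← add_assoc, ← Finset.sum_add_distrib]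
  congr 1
  · apply Finset.sum_congr rfl; intro j _; rw [gb]; ring
  · ring

/-- q-binomial theorem, with `p = q^2`. -/
lemma qbinom (q : ℂ) (hq : q ≠ 0) (n : ℕ) (y : ℂ) :
    ∑ j ∈ Finset.range (n+1), gb (q^2) n j * (q^((j:ℤ)^2 - j) * (-y)^j) =
      ∏ i ∈ Finset.range n, (1 - y * (q^2)^i) := by
  induction n generalizing y with
  | zero => simp [gb]
  | succ n ih =>
    rw [sum_gb_succ, Finset.prod_range_succ']
    have h1 : ∀ i, 1 - y * (q^2)^(i+1) = 1 - (y * q^2) * (q^2)^i := by intro i; ring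
    simp_rw [h1]
    rw [← ih (y*q^2), pow_zero, mul_one, mul_sub, mul_one, sub_eq_add_neg, Finset.sum_mul, add_comm]
    congr 1
    · apply Finset.sum_congr rfl; intro j _
      ring
    · rw [← Finset.sum_neg_distrib]
      apply Finset.sum_congr rfl; intro j _
      have : q ^ ((((j+1:ℕ):ℤ))^2 - ((j+1:ℕ):ℤ)) = q^((j:ℤ)^2 - j) * (q^2)^j := by
        rw [← pow_mul, ← zpow_natCast, ← zpow_add₀ hq]; congr 1; push_cast; ring
      rw [this]; ring

lemma pf0 (q : ℂ) (hq : q ≠ 0) (n : ℕ) (y : ℂ) (hy : y ≠ 0) (h : ∀ i : ℕ, 1 - y * (q^2)^i ≠ 0) :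
    (∑ j ∈ Finset.range (n+1), gb (q^2) n j * ((-1)^j * q^((j:ℤ)^2 + j) / (1 - y * (q^2)^j))) *
      ∏ i ∈ Finset.range (n+1), (1 - y * (q^2)^i) = PP (q^2) n := by
  induction n generalizing y with
  | zero => simp [gb, PP]; field_simp [h 0]; have := h 0; simp at this; rw [div_self this]
  | succ n ih =>
    rw [sum_gb_succ]
    have e1 := ih y hy h
    have hs : ∀ i:ℕ, 1 - (y*q^2) * (q^2)^i = 1 - y * (q^2)^(i+1) := by intro i; ring
    have e2' := ih (y*q^2) (mul_ne_zero hy (pow_ne_zero _ hq)) (by intro i; rw [hs]; exact h _)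
    simp_rw [hs] at e2'
    set S := ∑ j ∈ Finset.range (n+1), gb (q^2) n j * ((-1)^j * q^((j:ℤ)^2 + j)) with hS
    set f1 := ∑ j ∈ Finset.range (n+1), gb (q^2) n j * ((-1)^j * q^((j:ℤ)^2 + j) / (1 - y * (q^2)^j))
    set f2 := ∑ j ∈ Finset.range (n+1), gb (q^2) n j * ((-1)^j * q^((j:ℤ)^2 + j) / (1 - y * (q^2)^(j+1)))
    have A : ∑ j ∈ Finset.range (n+1), gb (q^2) n j * ((-1)^(j+1) * q^(((j+1:ℕ):ℤ)^2 + ((j+1:ℕ):ℤ)) / (1 - y * (q^2)^(j+1)))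
        = -(1/y) * (f2 - S) := by
      rw [hS, ← Finset.sum_sub_distrib, Finset.mul_sum]
      apply Finset.sum_congr rfl; intro j _
      have : q ^ ((((j+1:ℕ):ℤ))^2 + ((j+1:ℕ):ℤ)) = q^((j:ℤ)^2 + j) * (q^2)^(j+1) := by
        rw [← pow_mul, ← zpow_natCast, ← zpow_add₀ hq]; congr 1; push_cast; ring
      rw [this]
      replace this := h (j+1)
      generalize (q^2)^(j+1) = t at *
      generalize q^((j:ℤ)^2 + j) = u at *
      have hi := mul_inv_cancel₀ this
      have hyi := mul_inv_cancel₀ hy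
      linear_combination gb (q^2) n j * (-1)^j * u * (y⁻¹ * hi + t * (1 - y * t)⁻¹ * hyi)
    have B : ∑ j ∈ Finset.range (n+1), gb (q^2) n j * ((q^2)^j * ((-1)^j * q^((j:ℤ)^2 + j) / (1 - y * (q^2)^j)))
        = (1/y) * (f1 - S) := by
      rw [hS, ← Finset.sum_sub_distrib, Finset.mul_sum]
      apply Finset.sum_congr rfl; intro j _
      have := h j
      generalize (q^2)^j = t at *
      generalize q^((j:ℤ)^2 + j) = u at *
      have hi := mul_inv_cancel₀ this
      have hyi := mul_inv_cancel₀ hy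
      linear_combination (-gb (q^2) n j) * (-1)^j * u * (y⁻¹ * hi + t * (1 - y * t)⁻¹ * hyi)
    rw [A, B, PP_succ]
    rw [Finset.prod_range_succ] 
    have e3 : (∏ i ∈ Finset.range (n+1), (1 - y * (q^2)^i)) * (1 - y * (q^2)^(n+1)) =
        (∏ i ∈ Finset.range (n+1), (1 - y * (q^2)^(i+1))) * (1 - y) := by
      rw [← Finset.prod_range_succ, Finset.prod_range_succ']; simp
    have : (f1 * ((∏ i ∈ Finset.range (n+1), (1 - y * (q^2)^i)) * (1 - y * (q^2)^(n+1)))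
       - f2 * ((∏ i ∈ Finset.range (n+1), (1 - y * (q^2)^(i+1))) * (1 - y))) = y * (PP (q^2) n * (1 - (q^2)^(n+1))) := by
      linear_combination (1 - y * (q^2)^(n+1)) * e1 - (1-y) * e2'
    rw [← e3] at this
    field_simp
    linear_combination this

lemma pfc (q : ℂ) (hq : q ≠ 0) (n : ℕ) (y : ℂ) (hy : y ≠ 0) (h : ∀ i : ℕ, 1 - y * (q^2)^i ≠ 0)
    (c : ℕ) (hc : c ≤ n) :
    (∑ j ∈ Finset.range (n+1), gb (q^2) n j * ((-1)^j * q^((j:ℤ)^2 + j - 2 * j * c) / (1 - y * (q^2)^j))) *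
      ∏ i ∈ Finset.range (n+1), (1 - y * (q^2)^i) = PP (q^2) n * y^c := by
  induction c with
  | zero => simpa using pf0 q hq n y hy h
  | succ c ih =>
    have ih := ih (by omega)
    have hz := qbinom q hq n ((q^2)^(-(c:ℤ)))
    rw [Finset.prod_eq_zero (i := c) (Finset.mem_range.2 (by omega))] at hz
    · rw [pow_succ y, ← mul_assoc, ← ih]
      suffices (∑ j ∈ Finset.range (n+1), gb (q^2) n j * ((-1)^j * q^((j:ℤ)^2 + j - 2 * j * ((c+1:ℕ):ℤ)) / (1 - y * (q^2)^j)))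
         = (∑ j ∈ Finset.range (n+1), gb (q^2) n j * ((-1)^j * q^((j:ℤ)^2 + j - 2 * j * c) / (1 - y * (q^2)^j))) * y by
        rw [this]; ring
      rw [← add_zero (_ * y), ← hz, Finset.sum_mul, ← Finset.sum_add_distrib]
      apply Finset.sum_congr rfl; intro j _
      have e1 : q^((j:ℤ)^2 + j - 2 * j * c) = q^((j:ℤ)^2 + j - 2 * j * ((c+1:ℕ):ℤ)) * (q^2)^j := by
        rw [← pow_mul, ← zpow_natCast, ← zpow_add₀ hq]; congr 1; push_cast; ring
      have e2 : q ^ ((j:ℤ)^2 - j) * (-(q^2)^(-(c:ℤ)))^j = (-1)^j * q^((j:ℤ)^2 + j - 2 * j * ((c+1:ℕ):ℤ)) := by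
        rw [neg_pow, ← zpow_natCast q 2, ← zpow_mul, ← zpow_natCast (q^(_:ℤ)) j, ← zpow_mul, mul_left_comm, ← zpow_add₀ hq]; congr 2; push_cast; ring
      rw [e1, e2]
      have := h j
      generalize (q^2)^j = t at *
      field_simp
      ring
    · rw [← zpow_natCast (q^2) c, ← zpow_add₀ (pow_ne_zero _ hq)]; simp

def cc (p : ℂ) (K : ℕ) (k : ℤ) : ℂ := if -(K:ℤ) ≤ k ∧ k ≤ K then gb p (2*K) (K+k).toNat else 0

lemma cc_sum (p : ℂ) (K : ℕ) (F : ℤ → ℂ) :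
    ∑' k, cc p K k * F k = ∑ j ∈ Finset.range (2*K+1), gb p (2*K) j * F ((j:ℤ) - K) := by
  rw [tsum_eq_sum (s := Finset.Icc (-(K:ℤ)) K)]
  · symm
    apply Finset.sum_nbij (fun j : ℕ => (j:ℤ) - K)
    · intro j hj; simp at hj ⊢; omega
    · intro i _ j _ h; simp at h; exact h
    · intro k hk; simp at hk ⊢; exact ⟨(K+k).toNat, by omega, by omega⟩
    · intro j hj; simp at hj
      rw [cc, if_pos (by omega)]
      congr 2; omega
  · intro k hk; simp at hk
    rw [cc, if_neg (by omega), zero_mul]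

lemma zpow_sign (K : ℕ) (j : ℕ) : (-1:ℂ)^((j:ℤ) - K) = (-1)^j * (-1)^K := by
  rw [zpow_sub₀ (by norm_num)]; simp
  rcases neg_one_pow_eq_or ℂ K with h | h <;> rw [h] <;> simp [div_neg]

lemma central (q x : ℂ) (hq : q ≠ 0) (hx : x ≠ 0) (h : ∀ i : ℤ, 1 - x * (q^2)^i ≠ 0) (K : ℕ) :
    (∑' k, cc (q^2) K k * ((-1)^k * q^(k^2 - k) * x^k)) *
    (∑' k, cc (q^2) K k * ((-1)^k * q^(k^2 + k) / (1 - x * (q^2)^k))) * (1 - x * (q^2)^K) = PP (q^2) (2*K) := by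
  rw [cc_sum, cc_sum]
  have hp : q^2 ≠ 0 := pow_ne_zero _ hq
  set y := x * (q^2)^(-(K:ℤ)) with hy
  have hy0 : y ≠ 0 := mul_ne_zero hx (zpow_ne_zero _ hp)
  have hyi : ∀ j : ℕ, y * (q^2)^j = x * (q^2)^((j:ℤ) - K) := by
    intro j; rw [hy, mul_assoc, ← zpow_natCast (q^2) j, ← zpow_add₀ hp, neg_add_eq_sub]
  have e1 := qbinom q hq (2*K) y
  have e2 := pfc q hq (2*K) y hy0 (by intro i; rw [hyi]; exact h _) K (by omega)
  rw [Finset.prod_range_succ, ← e1] at e2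
  have hl : y * (q^2)^(2*K) = x * (q^2)^K := by
    rw [hyi, ← zpow_natCast (q^2) K]; congr 2; push_cast; omega
  rw [hl] at e2
  have f1 : ∑ j ∈ Finset.range (2*K+1), gb (q^2) (2*K) j * ((-1)^((j:ℤ) - K) * q^(((j:ℤ) - K)^2 - ((j:ℤ) - K)) * x^((j:ℤ)-K))
     = (-1)^K * x^(-(K:ℤ)) * q^((K:ℤ)^2 + K) * ∑ j ∈ Finset.range (2*K+1), gb (q^2) (2*K) j * (q^((j:ℤ)^2 - j) * (-y)^j) := by
    rw [Finset.mul_sum]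
    apply Finset.sum_congr rfl; intro j _
    have : q^(((j:ℤ) - K)^2 - ((j:ℤ) - K)) = q^((K:ℤ)^2 + K) * q^((j:ℤ)^2 - j) * q^(2*(-(K:ℤ))*j) := by
      rw [← zpow_add₀ hq, ← zpow_add₀ hq]; congr 1; ring
    rw [this, zpow_sign, sub_eq_add_neg (j:ℤ) (K:ℤ), zpow_add₀ hx, hy, neg_pow (_ * _), mul_pow, ← zpow_natCast q 2, ← zpow_mul, ← zpow_natCast (q^(_:ℤ)) j, ← zpow_mul]
    push_cast
    simp only [zpow_natCast]
    ring
  have f2 : ∑ j ∈ Finset.range (2*K+1), gb (q^2) (2*K) j * ((-1)^((j:ℤ) - K) * q^(((j:ℤ) - K)^2 + ((j:ℤ) - K)) / (1 - x * (q^2)^((j:ℤ) - K)))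
     = (-1)^K * q^((K:ℤ)^2 - K) * ∑ j ∈ Finset.range (2*K+1), gb (q^2) (2*K) j * ((-1)^j * q^((j:ℤ)^2 + j - 2 * j * K) / (1 - y * (q^2)^j)) := by
    rw [Finset.mul_sum]
    apply Finset.sum_congr rfl; intro j _
    have : q^(((j:ℤ) - K)^2 + ((j:ℤ) - K)) = q^((K:ℤ)^2 - K) * q^((j:ℤ)^2 + j - 2*j*K) := by
      rw [← zpow_add₀ hq]; congr 1; ring
    rw [this, zpow_sign, hyi]
    ring
  rw [f1, f2]
  have hs : ((-1:ℂ)^K)*(-1)^K = 1 := by rw [← mul_pow]; norm_num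
  have hyK : y^K * (x^(-(K:ℤ)) * q^((K:ℤ)^2 + K) * q^((K:ℤ)^2 - K)) = 1 := by
    rw [hy, mul_pow, ← zpow_natCast q 2, ← zpow_mul, ← zpow_natCast (q^(_:ℤ)) K, ← zpow_mul, ← zpow_natCast x K]
    have a1 : x^(K:ℤ) * x^(-(K:ℤ)) = 1 := by rw [← zpow_add₀ hx]; simp
    have a2 : q ^ (((2:ℕ):ℤ) * -(K:ℤ) * K) * q^((K:ℤ)^2 + K) * q^((K:ℤ)^2 - K) = 1 := by
      rw [← zpow_add₀ hq, ← zpow_add₀ hq]; push_cast; convert zpow_zero q using 2; ring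
    linear_combination a2 * x^(K:ℤ) * x^(-(K:ℤ)) + a1
  generalize (∑ j ∈ Finset.range (2*K+1), gb (q^2) (2*K) j * (q^((j:ℤ)^2 - j) * (-y)^j)) = A at *
  generalize (∑ j ∈ Finset.range (2*K+1), gb (q^2) (2*K) j * ((-1)^j * q^((j:ℤ)^2 + j - 2 * j * K) / (1 - y * (q^2)^j))) = B at *
  linear_combination (x^(-(K:ℤ)) * q^((K:ℤ)^2 + K) * q^((K:ℤ)^2 - K)) * e2 + PP (q^2) (2*K) * hyK + (x^(-(K:ℤ)) * q^((K:ℤ)^2 + K) * q^((K:ℤ)^2 - K)) * A * B * (1 - x * (q^2)^K) * hs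


lemma one_sub_pow_ne (p : ℂ) (hp : ‖p‖ < 1) (i : ℕ) : 1 - p^(i+1) ≠ 0 := by
  intro h
  have : ‖p^(i+1)‖ = 1 := by rw [← sub_eq_zero.1 h]; simp
  rw [norm_pow] at this
  exact absurd this (pow_lt_one₀ (norm_nonneg _) hp (by omega)).ne

lemma tprod_ne (p : ℂ) (hp : ‖p‖ < 1) : (∏' n : ℕ, (1 - p^(n+1))) ≠ 0 := by
  have := tprod_one_add_ne_zero_of_summable (f := fun n : ℕ => -p^(n+1)) ?_ ?_
  · simpa [sub_eq_add_neg] using this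
  · intro i; rw [← sub_eq_add_neg]; exact one_sub_pow_ne p hp i
  · simp only [norm_neg, norm_pow]
    exact (summable_nat_add_iff 1).2 (summable_geometric_of_lt_one (norm_nonneg _) hp)

lemma PP_tendsto (p : ℂ) (hp : ‖p‖ < 1) : Tendsto (PP p) atTop (𝓝 (∏' n : ℕ, (1 - p^(n+1)))) := by
  have := (ModularForm.multipliable_one_sub_pow hp)
  exact this.hasProd.tendsto_prod_nat

lemma PP_ne (p : ℂ) (hp : ‖p‖ < 1) (n : ℕ) : PP p n ≠ 0 :=
  Finset.prod_ne_zero_iff.2 fun i _ => one_sub_pow_ne p hp i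

lemma cc_eq (p : ℂ) (hp : ‖p‖ < 1) (K : ℕ) (k : ℤ) (h : -(K:ℤ) ≤ k ∧ k ≤ K) :
    cc p K k = PP p (2*K) * (PP p (K+k).toNat)⁻¹ * (PP p (K-k).toNat)⁻¹ := by
  rw [cc, if_pos h]
  have := gb_mul p (K+k).toNat (K-k).toNat
  have e : (K+k).toNat + (K-k).toNat = 2*K := by omega
  rw [e] at this
  rw [← this]
  have h1 := PP_ne p hp (K+k).toNat
  have h2 := PP_ne p hp (K-k).toNat
  field_simp

lemma cc_bound (p : ℂ) (hp : ‖p‖ < 1) : ∃ B : ℝ, 0 ≤ B ∧ ∀ K k, ‖cc p K k‖ ≤ B := by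
  have t1 := PP_tendsto p hp
  have t2 := t1.inv₀ (tprod_ne p hp)
  obtain ⟨B1, hB1⟩ := (Metric.isBounded_range_of_tendsto _ t1).exists_norm_le
  obtain ⟨B2, hB2⟩ := (Metric.isBounded_range_of_tendsto _ t2).exists_norm_le
  have h1 : ∀ n, ‖PP p n‖ ≤ B1 := fun n => hB1 _ ⟨n, rfl⟩
  have h2 : ∀ n, ‖(PP p n)⁻¹‖ ≤ B2 := fun n => hB2 _ ⟨n, rfl⟩
  have b1 : 0 ≤ B1 := (norm_nonneg _).trans (h1 0)
  have b2 : 0 ≤ B2 := (norm_nonneg _).trans (h2 0)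
  refine ⟨B1 * B2 * B2, by positivity, fun K k => ?_⟩
  by_cases h : -(K:ℤ) ≤ k ∧ k ≤ K
  · rw [cc_eq p hp K k h, norm_mul, norm_mul]
    gcongr <;> simp only [h1, h2]
  · rw [cc, if_neg h, norm_zero]; positivity

lemma cc_tendsto (p : ℂ) (hp : ‖p‖ < 1) (k : ℤ) :
    Tendsto (fun K => cc p K k) atTop (𝓝 (∏' n : ℕ, (1 - p^(n+1)))⁻¹) := by
  have t1 := PP_tendsto p hp
  have t2 := t1.inv₀ (tprod_ne p hp)
  have a1 : Tendsto (fun K : ℕ => 2*K) atTop atTop := tendsto_atTop_mono (fun K => by simp only [id]; omega) tendsto_id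
  have a2 : Tendsto (fun K : ℕ => (K+k).toNat) atTop atTop := by
    rw [tendsto_atTop]; intro b
    filter_upwards [eventually_ge_atTop (b + k.natAbs)] with K hK
    omega
  have a3 : Tendsto (fun K : ℕ => (K-k).toNat) atTop atTop := by
    rw [tendsto_atTop]; intro b
    filter_upwards [eventually_ge_atTop (b + k.natAbs)] with K hK
    omega
  have := ((t1.comp a1).mul (t2.comp a2)).mul (t2.comp a3)
  rw [mul_inv_cancel₀ (tprod_ne p hp), one_mul] at this
  refine this.congr' ?_
  filter_upwards [eventually_ge_atTop k.natAbs] with K hK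
  rw [cc_eq p hp K k (by omega)]
  rfl

lemma cc_tendsto_sum (p : ℂ) (hp : ‖p‖ < 1) (F : ℤ → ℂ) (hF : Summable fun k => ‖F k‖) :
    Tendsto (fun K => ∑' k, cc p K k * F k) atTop (𝓝 ((∏' n : ℕ, (1 - p^(n+1)))⁻¹ * ∑' k, F k)) := by
  obtain ⟨B, hB0, hB⟩ := cc_bound p hp
  rw [← tsum_mul_left]
  refine tendsto_tsum_of_dominated_convergence (hF.mul_left B) (fun k => (cc_tendsto p hp k).mul_const _) ?_
  refine Eventually.of_forall fun K k => ?_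
  rw [norm_mul]
  gcongr
  exact hB K k

/-- Partial fraction expansion of `1/ϑ`. -/
lemma pf_main (q x : ℂ) (hq : q ≠ 0) (hq1 : ‖q‖ < 1) (hx : x ≠ 0) (h : ∀ i : ℤ, 1 - x * (q^2)^i ≠ 0)
    (hS1 : Summable fun k : ℤ => ‖(-1)^k * q^(k^2 - k) * x^k‖)
    (hS2 : Summable fun k : ℤ => ‖(-1)^k * q^(k^2 + k) / (1 - x * (q^2)^k)‖) :
    (∑' k : ℤ, (-1)^k * q^(k^2 - k) * x^k) * (∑' k : ℤ, (-1)^k * q^(k^2 + k) / (1 - x * (q^2)^k)) =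
      (∏' n : ℕ, (1 - (q^2)^(n+1)))^3 := by
  have hp : ‖q^2‖ < 1 := by rw [norm_pow]; exact pow_lt_one₀ (norm_nonneg _) hq1 (by norm_num)
  have t1 := cc_tendsto_sum (q^2) hp _ hS1
  have t2 := cc_tendsto_sum (q^2) hp _ hS2
  have t3 : Tendsto (fun K : ℕ => 1 - x * (q^2)^K) atTop (𝓝 (1 - x * 0)) :=
    ((tendsto_pow_atTop_nhds_zero_of_norm_lt_one hp).const_mul x).const_sub 1
  have t4 := (t1.mul t2).mul t3
  have t5 : Tendsto (fun K : ℕ => PP (q^2) (2*K)) atTop (𝓝 (∏' n : ℕ, (1 - (q^2)^(n+1)))) :=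
    (PP_tendsto _ hp).comp (tendsto_atTop_mono (fun K => by simp only [id]; omega) tendsto_id)
  have := tendsto_nhds_unique (t4.congr (central q x hq hx h)) t5
  have hE := tprod_ne _ hp
  generalize (∏' n : ℕ, (1 - (q^2)^(n+1))) = E at *
  field_simp at this
  linear_combination this

lemma e2_add (z w : ℂ) : e2 (z + w) = e2 z * e2 w := by
  simp only [e2, mul_add, Complex.exp_add]

lemma e2_zpow (z : ℂ) (k : ℤ) : e2 z ^ k = e2 (k * z) := by
  rw [e2, e2, ← Complex.exp_int_mul]; congr 1; ring

lemma e2_ne (z : ℂ) : e2 z ≠ 0 := Complex.exp_ne_zero _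

lemma e2_zero : e2 0 = 1 := by simp [e2]

lemma qpow_eq (τ x : ℂ) : qpow τ x = e2 (τ * x) := by
  rw [qpow, e2]; congr 1; ring

lemma norm_e2 (z : ℂ) : ‖e2 z‖ = Real.exp (-(2 * Real.pi * z.im)) := by
  rw [e2, Complex.norm_exp]; congr 1; simp

lemma norm_sign (k : ℤ) : ‖(-1:ℂ)^k‖ = 1 := by simp

lemma norm_e2' (a b τ : ℂ) (u v w : ℝ) :
    ‖e2 (u * a + v * b + τ * w)‖ = Real.exp (-(2 * Real.pi * (u * a.im + v * b.im + w * τ.im))) := by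
  rw [norm_e2]; congr 3; simp; ring

lemma gs (T S : ℝ) (hT : 0 < T) : Summable fun k : ℤ => Real.exp (-T * k^2 + S * |(k:ℝ)|) := by
  have := summable_pow_mul_jacobiTheta₂_term_bound (S / (2 * Real.pi)) (T := T / Real.pi)
    (div_pos hT Real.pi_pos) 0
  refine this.congr fun k => ?_
  rw [pow_zero, one_mul]; congr 1
  have := Real.pi_ne_zero
  push_cast
  field_simp
  ring

lemma gs1 (T c : ℝ) (hT : 0 < T) : Summable fun k : ℤ => Real.exp (-T * k^2 + c * k) := by
  refine (gs T |c| hT).of_nonneg_of_le (fun _ => (Real.exp_pos _).le) fun k => ?_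
  apply Real.exp_le_exp.2
  have := le_abs_self (c * k)
  rw [abs_mul] at this
  linarith

lemma summable1 (f : ℤ → ℂ) (T c c0 : ℝ) (hT : 0 < T)
    (hf : ∀ r, ‖f r‖ ≤ Real.exp (-T * r^2 + c * r + c0)) : Summable fun x => ‖f x‖ := by
  refine ((gs1 T c hT).mul_right (Real.exp c0)).of_nonneg_of_le (fun _ => norm_nonneg _) fun k => ?_
  rw [← Real.exp_add]; exact hf k

lemma summable2 (f : ℤ × ℤ → ℂ) (T c d c0 : ℝ) (hT : 0 < T)
    (hf : ∀ r l, ‖f (r, l)‖ ≤ Real.exp (-T * (r^2 + l^2) + c * r + d * l + c0)) : Summable fun x => ‖f x‖ := by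
  refine (((gs1 T c hT).mul_of_nonneg (gs1 T d hT) (fun _ => (Real.exp_pos _).le)
    (fun _ => (Real.exp_pos _).le)).mul_right (Real.exp c0)).of_nonneg_of_le (fun _ => norm_nonneg _) ?_
  rintro ⟨r, l⟩
  refine (hf r l).trans (le_of_eq ?_)
  rw [← Real.exp_add, ← Real.exp_add]; congr 1; ring

lemma summable3 (f : (ℤ × ℤ) × ℤ → ℂ) (T c d e c0 : ℝ) (hT : 0 < T)
    (hf : ∀ r l s, ‖f ((r, l), s)‖ ≤ Real.exp (-T * (r^2 + l^2 + s^2) + c * r + d * l + e * s + c0)) :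
    Summable fun x => ‖f x‖ := by
  refine ((((gs1 T c hT).mul_of_nonneg (gs1 T d hT) (fun _ => (Real.exp_pos _).le)
    (fun _ => (Real.exp_pos _).le)).mul_of_nonneg (gs1 T e hT) (fun _ => mul_nonneg (Real.exp_pos _).le (Real.exp_pos _).le)
    (fun _ => (Real.exp_pos _).le)).mul_right (Real.exp c0)).of_nonneg_of_le (fun _ => norm_nonneg _) ?_
  rintro ⟨⟨r, l⟩, s⟩
  refine (hf r l s).trans (le_of_eq ?_)
  rw [← Real.exp_add, ← Real.exp_add, ← Real.exp_add]; congr 1; ring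

lemma geom_Ico (X : ℂ) (hX0 : X ≠ 0) (hX : 1 - X ≠ 0) (A B : ℤ) (h : A ≤ B) :
    ∑ s ∈ Finset.Ico A B, X^s = (X^A - X^B) / (1 - X) := by
  induction B, h using Int.leInduction with
  | base => simp
  | succ B hB ih =>
    rw [← Finset.insert_Ico_right_eq_Ico_add_one hB, Finset.sum_insert (by simp), ih, zpow_add₀ hX0, zpow_one]
    field_simp
    ring

lemma hasSum_geom (X : ℂ) (hX0 : X ≠ 0) (hX : 1 - X ≠ 0) (A B : ℤ) :
    HasSum (fun s : ℤ => ((if A ≤ s then 1 else 0) - (if B ≤ s then 1 else 0)) * X^s) ((X^A - X^B) / (1 - X)) := by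
  rcases le_total A B with h | h
  · rw [← geom_Ico X hX0 hX A B h]
    have : ∑ s ∈ Finset.Ico A B, X^s = ∑ s ∈ Finset.Ico A B, ((if A ≤ s then 1 else 0) - (if B ≤ s then 1 else 0)) * X^s := by
      apply Finset.sum_congr rfl; intro s hs; simp at hs; rw [if_pos hs.1, if_neg (by omega)]; ring
    rw [this]
    apply hasSum_sum_of_ne_finset_zero
    intro s hs; simp at hs
    by_cases h1 : A ≤ s
    · rw [if_pos h1, if_pos (hs h1)]; ring
    · rw [if_neg h1, if_neg (by omega)]; ring
  · have e : (X^A - X^B) / (1 - X) = -((X^B - X^A) / (1 - X)) := by ring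
    rw [e, ← geom_Ico X hX0 hX B A h]
    have : -∑ s ∈ Finset.Ico B A, X^s = ∑ s ∈ Finset.Ico B A, ((if A ≤ s then 1 else 0) - (if B ≤ s then 1 else 0)) * X^s := by
      rw [← Finset.sum_neg_distrib]
      apply Finset.sum_congr rfl; intro s hs; simp at hs; rw [if_pos hs.1, if_neg (by omega)]; ring
    rw [this]
    apply hasSum_sum_of_ne_finset_zero
    intro s hs; simp at hs
    by_cases h1 : B ≤ s
    · rw [if_pos h1, if_pos (hs h1)]; ring
    · rw [if_neg h1, if_neg (by omega)]; ring

/-- positivity of the quadratic form on the relevant cone -/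
lemma quad_pos (n : ℕ) : ∃ ε : ℝ, 0 < ε ∧ ∀ r s l : ℝ, 0 ≤ (s - (2*n+1) * l) * (r - s) →
    ε * (r^2 + l^2 + s^2) ≤ (2*n+1) * r^2 + 2 * r * s + l^2 + 2 * l * s := by
  rcases Nat.eq_zero_or_pos n with rfl | hn
  · refine ⟨1/2, by norm_num, fun r s l h => ?_⟩
    simp at h ⊢
    nlinarith [sq_nonneg (r+s+l)]
  · have hn' : (1:ℝ) ≤ n := by exact_mod_cast hn
    obtain ⟨N, hN⟩ : ∃ N : ℝ, N = 2*n+1 := ⟨_, rfl⟩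
    have hN3 : 3 ≤ N := by linarith
    rw [← hN]
    refine ⟨1/(N^2+11), by positivity, fun r s l h => ?_⟩
    have key : N * r^2 + 2 * r * s + l^2 + 2 * l * s = (2/N) * ((s - N * l) * (r - s)) +
        ((l+r)^2 + (N-1)*(r + s/N)^2 + ((N+1)/N^2) * s^2) := by
      field_simp; ring
    have h0 : 0 ≤ (2/N) * ((s - N * l) * (r - s)) := by positivity
    set D := (l+r)^2 + (N-1)*(r + s/N)^2 + ((N+1)/N^2) * s^2 with hD
    have p1 := sq_nonneg (l+r)
    have p2 : (0:ℝ) ≤ (r + s/N)^2 := sq_nonneg _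
    have p3 : 0 ≤ (s/N)^2 := sq_nonneg _
    have e3 : ((N+1)/N^2) * s^2 = (N+1) * (s/N)^2 := by field_simp
    have q2 : 2 * (r+s/N)^2 ≤ (N-1)*(r + s/N)^2 := mul_le_mul_of_nonneg_right (by linarith) p2
    have q3 : 4 * (s/N)^2 ≤ (N+1) * (s/N)^2 := mul_le_mul_of_nonneg_right (by linarith) p3
    have b1 : (s/N)^2 ≤ D := by rw [hD, e3]; linarith
    have b2 : s^2 ≤ N^2 * D := by
      have : s^2 = N^2 * (s/N)^2 := by field_simp
      rw [this]; gcongr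
    have b3 : r^2 ≤ 3 * D := by
      have : r^2 ≤ 2 * (r+s/N)^2 + 2 * (s/N)^2 := by nlinarith [sq_nonneg (r + s/N + s/N)]
      rw [hD, e3]; linarith
    have b4 : l^2 ≤ 8 * D := by
      have : l^2 ≤ 2 * (l+r)^2 + 2 * r^2 := by nlinarith [sq_nonneg (l + r + r)]
      have : (l+r)^2 ≤ D := by rw [hD, e3]; linarith
      linarith
    rw [key, one_div, inv_mul_le_iff₀ (by positivity)]
    nlinarith [mul_nonneg (sq_nonneg N) h0]

lemma bdd_inv (w τ : ℂ) (hτ : 0 < τ.im) (h : ∀ j : ℤ, 1 - e2 (w + 2 * j * τ) ≠ 0) :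
    ∃ K : ℝ, ∀ j : ℤ, ‖(1 - e2 (w + 2 * j * τ))⁻¹‖ ≤ Real.exp K := by
  have hn : ∀ j : ℤ, ‖e2 (w + 2 * j * τ)‖ = Real.exp (-(2 * Real.pi * (w.im + 2 * j * τ.im))) := by
    intro j; rw [norm_e2]; congr 3; simp
  -- outside a finite set the norm is at most 2
  obtain ⟨J, hJ⟩ : ∃ J : ℕ, ∀ j : ℤ, J ≤ |j| → ‖(1 - e2 (w + 2 * j * τ))⁻¹‖ ≤ 2 := by
    obtain ⟨J, hJ⟩ := exists_nat_ge ((1 + |w.im|) / τ.im)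
    refine ⟨J, fun j hj => ?_⟩
    have hJ' : 1 + |w.im| ≤ J * τ.im := by rwa [div_le_iff₀ hτ] at hJ
    have hw1 := le_abs_self w.im
    have hw2 := neg_abs_le w.im
    have hpi := Real.pi_gt_three
    rw [norm_inv]
    apply inv_le_of_inv_le₀ (by norm_num)
    rcases abs_cases j with ⟨h1, h2⟩ | ⟨h1, h2⟩
    · have hj' : (J:ℝ) ≤ j := by rw [h1] at hj; exact_mod_cast hj
      have : J * τ.im ≤ j * τ.im := by gcongr
      have h3 : ‖e2 (w + 2 * j * τ)‖ ≤ 1/2 := by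
        rw [hn]
        have : Real.exp (-(2 * Real.pi * (w.im + 2 * j * τ.im))) ≤ Real.exp (-1) := by
          apply Real.exp_le_exp.2; nlinarith
        have := Real.exp_neg_one_lt_half
        linarith
      have := norm_sub_norm_le (1:ℂ) (e2 (w + 2 * j * τ))
      rw [norm_one] at this
      norm_num
      linarith
    · have hj' : (J:ℝ) ≤ -j := by rw [h1] at hj; exact_mod_cast hj
      have : J * τ.im ≤ (-j) * τ.im := by gcongr
      have h3 : 2 ≤ ‖e2 (w + 2 * j * τ)‖ := by
        rw [hn]
        have : Real.exp 1 ≤ Real.exp (-(2 * Real.pi * (w.im + 2 * j * τ.im))) := by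
          apply Real.exp_le_exp.2; nlinarith
        have := Real.exp_one_gt_d9
        linarith
      have := norm_sub_norm_le (e2 (w + 2 * j * τ)) (1:ℂ)
      rw [norm_one, norm_sub_rev] at this
      norm_num
      linarith
  obtain ⟨B, hB⟩ := ((Finset.Icc (-(J:ℤ)) J).image fun j : ℤ => ‖(1 - e2 (w + 2 * j * τ))⁻¹‖).bddAbove
  refine ⟨max B 2, fun j => le_trans ?_ (Real.add_one_le_exp _)⟩
  by_cases hj : (J:ℤ) ≤ |j|
  · exact (hJ j hj).trans (by linarith [le_max_right B 2])
  · have : ‖(1 - e2 (w + 2 * j * τ))⁻¹‖ ≤ B := by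
      apply hB
      simp only [Finset.coe_image, Set.mem_image]
      refine ⟨j, ?_, rfl⟩
      have := abs_lt.1 (not_le.1 hj)
      simp; omega
    linarith [le_max_left B 2]

lemma sign_add (l k : ℤ) : (-1:ℂ)^(l+k) = (-1)^l * (-1)^k := zpow_add₀ (by norm_num) _ _

lemma sign_neg (l : ℤ) : (-1:ℂ)^(-l) = (-1)^l := by
  rw [zpow_neg, ← inv_zpow]; norm_num

lemma sign_odd (n s l : ℤ) : (-1:ℂ)^(2*n+1-2*s-l) = -(-1)^l := by
  have : 2*n+1-2*s-l = 2 * (n-s) + (1 + -l) := by ring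
  rw [this, sign_add, sign_add, sign_neg, zpow_mul]; norm_num

/-- The coefficient of the alternating theta series. -/
def hl (τ : ℂ) (n : ℕ) (s l : ℤ) : ℂ := (-1)^l * e2 (τ * (l^2 - (2*n+1)*l + 2*l*s))

lemma tsum_hl (τ : ℂ) (n : ℕ) (s : ℤ) : ∑' l : ℤ, hl τ n s l = 0 := by
  have h := (Equiv.subLeft (2*(n:ℤ)+1-2*s)).tsum_eq (hl τ n s)
  have h2 : ∑' l : ℤ, hl τ n s (Equiv.subLeft (2*(n:ℤ)+1-2*s) l) = ∑' l : ℤ, -hl τ n s l := by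
    congr 1; ext l
    rw [Equiv.subLeft_apply, hl, hl, sign_odd]
    rw [neg_mul]; congr 3
    push_cast; ring
  rw [h2, tsum_neg] at h
  linear_combination (-1/2:ℂ) * h

lemma summable_hl (τ : ℂ) (hτ : 0 < τ.im) (n : ℕ) (s : ℤ) : Summable fun l => ‖hl τ n s l‖ := by
  have hpi := Real.pi_pos
  apply summable1 _ (2 * Real.pi * τ.im) (-(2 * Real.pi * τ.im) * (2*s - (2*n+1))) 0 (by positivity)
  intro l
  have := norm_e2' 0 0 τ 0 0 (l^2 - (2*n+1)*l + 2*l*s)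
  simp only [mul_zero, zero_add] at this
  push_cast at this
  rw [hl, norm_mul, norm_sign, one_mul, this]
  apply le_of_eq; congr 1; simp; ring

def psi (τ : ℂ) (n : ℕ) (a : ℂ) (s : ℤ) : ℂ :=
  ∑' r : ℤ, e2 (((2*n+1)*r + s) * a + τ * ((2*n+1)*r^2 + 2*r*s + s^2/(2*n+1)))

def Ss (τ : ℂ) (n : ℕ) (s : ℤ) : ℂ := ∑' l : ℤ, if (2*n+1)*l ≤ s then hl τ n s l else 0

def K3 (τ a b : ℂ) (n : ℕ) (x : (ℤ × ℤ) × ℤ) : ℂ :=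
  ((if (2*n+1)*x.1.2 ≤ x.2 then 1 else 0) - (if x.1.1 + n + 1 ≤ x.2 then 1 else 0)) *
   ((-1)^x.1.2 * e2 (((2*n+1)*x.1.1 + x.2) * a + x.2 * b +
    τ * ((2*n+1)*x.1.1^2 + 2*x.1.1*x.2 + x.1.2^2 - (2*n+1)*x.1.2 + 2*x.1.2*x.2)))

lemma summable_K3 (τ a b : ℂ) (hτ : 0 < τ.im) (n : ℕ) : Summable fun x => ‖K3 τ a b n x‖ := by
  obtain ⟨ε, hε, hQ⟩ := quad_pos n
  have hpi := Real.pi_pos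
  set y := 2 * Real.pi * τ.im with hy
  have hy0 : 0 < y := by positivity
  set A := 2 * Real.pi * a.im
  set B := 2 * Real.pi * b.im
  apply summable3 _ (y*ε) (-(2*n+1)*A + 2*y*(2*n+1)*(n+1) - 2*y*ε*(n+1)) (y*(2*n+1)) (-A - B + 2*y*(n+1))
    (y*(2*n+1)*(n+1)^2 - y*ε*(n+1)^2) (by positivity)
  intro r l s
  rw [K3]
  simp only
  by_cases hne : ((if (2*n+1)*l ≤ s then (1:ℂ) else 0) - (if r + n + 1 ≤ s then 1 else 0)) = 0
  · rw [hne, zero_mul, norm_zero]; exact (Real.exp_pos _).le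
  have h1 : ‖((if (2*n+1)*l ≤ s then (1:ℂ) else 0) - (if r + n + 1 ≤ s then 1 else 0))‖ ≤ 1 := by
    split_ifs <;> simp
  have h2 : 0 ≤ ((s:ℝ) - (2*n+1)*l) * (((r:ℝ)+n+1) - s) := by
    have : 0 ≤ (s - (2*n+1)*l) * ((r+n+1) - s) := by
      by_cases c1 : (2*n+1)*l ≤ s <;> by_cases c2 : r + n + 1 ≤ s
      · simp [c1, c2] at hne
      · apply mul_nonneg <;> omega
      · apply mul_nonneg_of_nonpos_of_nonpos <;> omega
      · simp [c1, c2] at hne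
    exact_mod_cast this
  have h3 := hQ _ _ _ h2
  have h4 := norm_e2' a b τ ((2*n+1)*r + s) s ((2*n+1)*r^2 + 2*r*s + l^2 - (2*n+1)*l + 2*l*s)
  push_cast at h4
  rw [norm_mul, norm_mul, norm_sign, one_mul, h4]
  refine (mul_le_of_le_one_left (Real.exp_pos _).le h1).trans ?_
  apply Real.exp_le_exp.2
  have h5 := mul_le_mul_of_nonneg_left h3 hy0.le
  have e1 : 2 * Real.pi * (((2*n+1)*r + s) * a.im + s * b.im + ((2*n+1)*r^2 + 2*r*s + l^2 - (2*n+1)*l + 2*l*s) * τ.im)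
    = ((2*n+1)*r + s) * A + s * B + ((2*n+1)*r^2 + 2*r*s + l^2 - (2*n+1)*l + 2*l*s) * y := by
    simp only [A, B, hy]; ring
  rw [e1]
  linear_combination h5

def Tt (τ b : ℂ) (n : ℕ) : ℂ := ∑' l : ℤ, (-1)^l * e2 ((2*n+1)*l * b + τ * ((2*n+2)*l^2 - (2*n+1)*l))
def Ph (τ a b : ℂ) (n : ℕ) : ℂ := ∑' j : ℤ, e2 ((2*n+1)*j * a + τ * ((2*n+1)*j^2)) / (1 - e2 (a + b + 2*j*τ))
def At (τ a b : ℂ) (n : ℕ) : ℂ := ∑' r : ℤ, (-1)^r * e2 ((2*n+2)*r * a + r * b + τ * ((2*n+2)*r^2 + (2*n+1)*r))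
def Pf (τ w : ℂ) : ℂ := ∑' j : ℤ, (-1)^j * e2 (τ * (j^2 + j)) / (1 - e2 (w + 2*j*τ))

lemma summable_gauss (τ a b : ℂ) (hτ : 0 < τ.im) (α β u v : ℝ) (hα : 0 < α) :
   Summable fun r : ℤ => ‖e2 (u * r * a + v * r * b + τ * (α * r^2 + β * r))‖ := by
  have hpi := Real.pi_pos
  apply summable1 _ (2 * Real.pi * τ.im * α) (-(2 * Real.pi) * (u * a.im + v * b.im + τ.im * β)) 0 (by positivity)
  intro r
  have := norm_e2' a b τ (u*r) (v*r) (α * r^2 + β * r)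
  push_cast at this
  rw [this]
  apply le_of_eq; congr 1; ring

lemma summable_T (τ b : ℂ) (hτ : 0 < τ.im) (n : ℕ) :
    Summable fun l : ℤ => ‖(-1)^l * e2 ((2*n+1)*l * b + τ * ((2*n+2)*l^2 - (2*n+1)*l))‖ := by
  refine (summable_gauss τ 0 b hτ (2*n+2) (-(2*n+1)) 0 (2*n+1) (by positivity)).congr fun l => ?_
  rw [norm_mul, norm_sign, one_mul]; congr 2; push_cast; ring

lemma summable_At (τ a b : ℂ) (hτ : 0 < τ.im) (n : ℕ) :
    Summable fun r : ℤ => ‖(-1)^r * e2 ((2*n+2)*r * a + r * b + τ * ((2*n+2)*r^2 + (2*n+1)*r))‖ := by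
  refine (summable_gauss τ a b hτ (2*n+2) (2*n+1) (2*n+2) 1 (by positivity)).congr fun l => ?_
  rw [norm_mul, norm_sign, one_mul]; congr 2; push_cast; ring

lemma summable_Ph (τ a b : ℂ) (hτ : 0 < τ.im) (n : ℕ) (h : ∀ j : ℤ, 1 - e2 (a + b + 2 * j * τ) ≠ 0) :
    Summable fun j : ℤ => ‖e2 ((2*n+1)*j * a + τ * ((2*n+1)*j^2)) / (1 - e2 (a + b + 2*j*τ))‖ := by
  obtain ⟨K, hK⟩ := bdd_inv (a+b) τ hτ h
  refine ((summable_gauss τ a b hτ (2*n+1) 0 (2*n+1) 0 (by positivity)).mul_right (Real.exp K)).of_nonneg_of_le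
    (fun _ => norm_nonneg _) fun j => ?_
  rw [div_eq_mul_inv, norm_mul]
  refine mul_le_mul (le_of_eq ?_) (hK j) (norm_nonneg _) (norm_nonneg _)
  congr 2; push_cast; ring

lemma summable_Pf (τ w : ℂ) (hτ : 0 < τ.im) (h : ∀ j : ℤ, 1 - e2 (w + 2 * j * τ) ≠ 0) :
    Summable fun j : ℤ => ‖(-1)^j * e2 (τ * (j^2 + j)) / (1 - e2 (w + 2*j*τ))‖ := by
  obtain ⟨K, hK⟩ := bdd_inv w τ hτ h
  refine ((summable_gauss τ 0 0 hτ 1 1 0 0 (by positivity)).mul_right (Real.exp K)).of_nonneg_of_le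
    (fun _ => norm_nonneg _) fun j => ?_
  rw [div_eq_mul_inv, norm_mul, norm_mul, norm_sign, one_mul]
  refine mul_le_mul (le_of_eq ?_) (hK j) (norm_nonneg _) (norm_nonneg _)
  congr 2; push_cast; ring

/-- (r,l) ↦ (l, r+l) -/
def eqA : ℤ × ℤ ≃ ℤ × ℤ where
  toFun x := (x.2, x.1 + x.2)
  invFun x := (x.2 - x.1, x.1)
  left_inv x := by ext <;> simp
  right_inv x := by ext <;> simp

/-- (r,l) ↦ (r, r+l) -/
def eqB : ℤ × ℤ ≃ ℤ × ℤ where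
  toFun x := (x.1, x.1 + x.2)
  invFun x := (x.1, x.2 - x.1)
  left_inv x := by ext <;> simp
  right_inv x := by ext <;> simp

/-- (s,r,l) ↦ ((r,l),s) -/
def eqC : ℤ × ℤ × ℤ ≃ (ℤ × ℤ) × ℤ where
  toFun x := ((x.2.1, x.2.2), x.1)
  invFun x := (x.2, x.1.1, x.1.2)
  left_inv x := rfl
  right_inv x := rfl

lemma core1 (τ a b : ℂ) (hτ : 0 < τ.im) (n : ℕ) (h : ∀ j : ℤ, 1 - e2 (a + b + 2 * j * τ) ≠ 0) :
    Tt τ b n * Ph τ a b n - e2 ((n+1) * (a+b)) * (At τ a b n * Pf τ (a+b)) = ∑' x, K3 τ a b n x := by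
  have s1 := summable_T τ b hτ n
  have s2 := summable_Ph τ a b hτ n h
  have s3 := summable_At τ a b hτ n
  have s4 := summable_Pf τ (a+b) hτ h
  rw [Tt, Ph, At, Pf, tsum_mul_tsum_of_summable_norm s1 s2, tsum_mul_tsum_of_summable_norm s3 s4]
  have TA := eqA.tsum_eq (fun z : ℤ × ℤ => ((-1)^z.1 * e2 ((2*n+1)*z.1 * b + τ * ((2*n+2)*z.1^2 - (2*n+1)*z.1))) *
    (e2 ((2*n+1)*z.2 * a + τ * ((2*n+1)*z.2^2)) / (1 - e2 (a + b + 2*z.2*τ))))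
  have TB := eqB.tsum_eq (fun z : ℤ × ℤ => ((-1)^z.1 * e2 ((2*n+2)*z.1 * a + z.1 * b + τ * ((2*n+2)*z.1^2 + (2*n+1)*z.1))) *
    ((-1)^z.2 * e2 (τ * (z.2^2 + z.2)) / (1 - e2 (a + b + 2*z.2*τ))))
  rw [← TA, ← TB, ← tsum_mul_left]
  have S1 := (eqA.summable_iff.2 (summable_mul_of_summable_norm s1 s2))
  have S2 := (eqB.summable_iff.2 (summable_mul_of_summable_norm s3 s4)).mul_left (e2 ((n+1) * (a+b)))
  have S3 := (summable_K3 τ a b hτ n).of_norm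
  rw [S3.tsum_prod, ← Summable.tsum_sub (by exact S1) (by exact S2)]
  congr 1; ext ⟨r, l⟩
  have hX0 := e2_ne (a + b + 2*((r+l:ℤ):ℂ)*τ)
  have hX := h (r+l)
  have g := hasSum_geom _ hX0 hX ((2*n+1)*l) (r+n+1)
  have g2 := (g.mul_left ((-1)^l * e2 ((2*n+1)*r * a + τ * ((2*n+1)*r^2 + l^2 - (2*n+1)*l)))).tsum_eq
  have e : ∑' s, K3 τ a b n ((r,l),s) = (-1)^l * e2 ((2*n+1)*r * a + τ * ((2*n+1)*r^2 + l^2 - (2*n+1)*l)) *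
   ((e2 (a + b + 2*((r+l:ℤ):ℂ)*τ) ^ ((2*n+1)*l) - e2 (a + b + 2*((r+l:ℤ):ℂ)*τ) ^ (r+n+1)) / (1 - e2 (a + b + 2*((r+l:ℤ):ℂ)*τ))) := by
    rw [← g2]
    congr 1; ext s
    have e' : e2 (((2*n+1)*r + s) * a + s * b + τ * ((2*n+1)*r^2 + 2*r*s + l^2 - (2*n+1)*l + 2*l*s))
      = e2 ((2*n+1)*r*a + τ*((2*n+1)*r^2+l^2-(2*n+1)*l)) * e2 (s*(a+b+2*((r+l:ℤ):ℂ)*τ)) := by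
      rw [← e2_add]; congr 1; push_cast; ring
    rw [K3, e2_zpow]; simp only; rw [e']; ring
  rw [e]
  simp only [eqA, eqB, Equiv.coe_fn_mk]
  rw [e2_zpow, e2_zpow, sign_add]
  have ss : ((-1:ℂ)^r) * (-1)^r = 1 := by rw [← mul_zpow]; norm_num
  have E1 : e2 ((2*n+1)*l * b + τ * ((2*n+2)*l^2 - (2*n+1)*l)) * e2 ((2*n+1)*((r+l:ℤ):ℂ) * a + τ * ((2*n+1)*((r+l:ℤ):ℂ)^2))
    = e2 ((2*n+1)*r * a + τ * ((2*n+1)*r^2 + l^2 - (2*n+1)*l)) * e2 ((((2*n+1)*l:ℤ):ℂ) * (a + b + 2*((r+l:ℤ):ℂ)*τ)) := by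
    rw [← e2_add, ← e2_add]; congr 1; push_cast; ring
  have E2 : e2 ((n+1) * (a+b)) * (e2 ((2*n+2)*r * a + r * b + τ * ((2*n+2)*r^2 + (2*n+1)*r)) * e2 (τ * (((r+l:ℤ):ℂ)^2 + ((r+l:ℤ):ℂ))))
    = e2 ((2*n+1)*r * a + τ * ((2*n+1)*r^2 + l^2 - (2*n+1)*l)) * e2 (((r+n+1:ℤ):ℂ) * (a + b + 2*((r+l:ℤ):ℂ)*τ)) := by
    rw [← e2_add, ← e2_add, ← e2_add]; congr 1; push_cast; ring
  rw [div_eq_mul_inv, div_eq_mul_inv, div_eq_mul_inv]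
  linear_combination (-1)^l * (1 - e2 (a + b + 2*((r+l:ℤ):ℂ)*τ))⁻¹ * (E1 - E2) - (-1)^l * (1 - e2 (a + b + 2*((r+l:ℤ):ℂ)*τ))⁻¹ * (e2 ((n+1) * (a+b)) * (e2 ((2*n+2)*r * a + r * b + τ * ((2*n+2)*r^2 + (2*n+1)*r)) * e2 (τ * (((r+l:ℤ):ℂ)^2 + ((r+l:ℤ):ℂ))))) * ss

lemma core2 (τ a b : ℂ) (hτ : 0 < τ.im) (n : ℕ) :
    HasSum (fun s : ℤ => e2 (s * b - τ * (s^2/(2*n+1))) * psi τ n a s * Ss τ n s) (∑' x, K3 τ a b n x) := by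
  have S3 := (summable_K3 τ a b hτ n).of_norm
  have S4 : Summable fun c => K3 τ a b n (eqC c) := eqC.summable_iff.2 S3
  have hN : (2*n+1:ℂ) ≠ 0 := by exact_mod_cast (by omega : 2*n+1 ≠ 0)
  rw [← eqC.tsum_eq, S4.tsum_prod]
  have F := S4.prod.hasSum
  suffices H : ∀ s : ℤ, e2 (s * b - τ * (s^2/(2*n+1))) * psi τ n a s * Ss τ n s = ∑' c : ℤ × ℤ, K3 τ a b n (eqC (s, c)) by
    simpa only [H] using F
  intro s
  have S5 : Summable fun y : ℤ × ℤ => K3 τ a b n ((y.1,y.2),s) := S4.prod_factor s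
  have : ∑' c : ℤ × ℤ, K3 τ a b n (eqC (s, c)) = ∑' r : ℤ, ∑' l : ℤ, K3 τ a b n ((r,l),s) := by
    rw [← S5.tsum_prod]; rfl
  rw [this, psi, mul_right_comm, ← tsum_mul_left]
  congr 1; ext r
  have hs := (summable_hl τ hτ n s).of_norm
  have hs1 : Summable fun l : ℤ => (if (2*n+1)*l ≤ s then hl τ n s l else 0) := by
    refine (hs.indicator {l : ℤ | (2*n+1)*l ≤ s}).congr fun l => ?_
    simp [Set.indicator_apply]
  have : ∀ l : ℤ, K3 τ a b n ((r,l),s) = e2 (((2*n+1)*r + s) * a + s * b + τ * ((2*n+1)*r^2 + 2*r*s)) *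
     ((if (2*n+1)*l ≤ s then hl τ n s l else 0) - (if r + n + 1 ≤ s then 1 else 0) * hl τ n s l) := by
    intro l
    have e : e2 (((2*n+1)*r + s) * a + s * b +
    τ * ((2*n+1)*r^2 + 2*r*s + l^2 - (2*n+1)*l + 2*l*s)) = e2 (((2*n+1)*r + s) * a + s * b + τ * ((2*n+1)*r^2 + 2*r*s)) * e2 (τ * (l^2 - (2*n+1)*l + 2*l*s)) := by
      rw [← e2_add]; congr 1; ring
    rw [K3]; simp only
    rw [e, hl]
    split_ifs <;> ring
  simp_rw [this]
  rw [tsum_mul_left, hs1.tsum_sub (hs.mul_left _), tsum_mul_left, tsum_hl, mul_zero, sub_zero, ← Ss, mul_right_comm, ← e2_add]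
  congr 2
  field_simp
  ring

lemma hs_of {ι : Type} {f g : ι → ℂ} {x y : ℂ} (H : HasSum g y) (hf : ∀ i, f i = g i) (hx : x = y) : HasSum f x := by
  have : f = g := funext hf
  rw [this, hx]; exact H

lemma psi_add (τ a : ℂ) (n : ℕ) (s : ℤ) : psi τ n a (s + (2*n+1)) = psi τ n a s := by
  have hN : (2*n+1:ℂ) ≠ 0 := by exact_mod_cast (by omega : 2*n+1 ≠ 0)
  rw [psi, psi, ← (Equiv.addRight (1:ℤ)).tsum_eq (fun r : ℤ => e2 (((2*n+1)*r + s) * a + τ * ((2*n+1)*r^2 + 2*r*s + s^2/(2*n+1))))]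
  congr 1; ext r
  rw [Equiv.coe_addRight]
  congr 1
  push_cast
  field_simp
  ring

lemma psi_add_mul (τ a : ℂ) (n : ℕ) (s r : ℤ) : psi τ n a ((2*n+1)*r + s) = psi τ n a s := by
  induction r using Int.induction_on with
  | zero => simp
  | succ i ih => 
    rw [← ih, ← psi_add τ a n ((2*n+1)*i + s)]; congr 1; ring
  | pred i ih => 
    rw [← ih, ← psi_add τ a n ((2*n+1)*(-(i:ℤ)-1) + s)]; congr 1; ring

lemma psi_neg (τ a : ℂ) (n : ℕ) (s : ℤ) : psi τ n (-a) s = psi τ n a (-s) := by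
  rw [psi, psi, ← (Equiv.neg ℤ).tsum_eq]
  congr 1; ext r
  rw [Equiv.neg_apply]
  congr 1
  push_cast
  ring

/-- The antisymmetrised theta function. -/
def Dp (τ a : ℂ) (n : ℕ) (s : ℤ) : ℂ := psi τ n a s - psi τ n a (-s)

lemma Dp_zero (τ a : ℂ) (n : ℕ) : Dp τ a n 0 = 0 := by simp [Dp]

lemma Dp_mul (τ a : ℂ) (n : ℕ) (r s : ℤ) : Dp τ a n ((2*n+1)*r+s) = Dp τ a n s := by
  rw [Dp, Dp, psi_add_mul]
  have : -((2*n+1)*r+s) = (2*n+1)*(-r) + (-s) := by ring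
  rw [this, psi_add_mul]

lemma Dp_neg (τ a : ℂ) (n : ℕ) (s : ℤ) : Dp τ a n (-s) = -Dp τ a n s := by
  rw [Dp, Dp, neg_neg, neg_sub]

def Hh (τ b : ℂ) (n : ℕ) (s l : ℤ) : ℂ := e2 (s * b - τ * (s^2/(2*n+1))) * hl τ n s l

def Ww (τ b : ℂ) (n : ℕ) (s : ℤ) : ℂ := e2 (s * b - τ * (s^2/(2*n+1))) * Ss τ n s

lemma anti (τ a b : ℂ) (hτ : 0 < τ.im) (n : ℕ) (h : ∀ j : ℤ, 1 - e2 (a + b + 2 * j * τ) ≠ 0)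
    (h' : ∀ j : ℤ, 1 - e2 (-a + b + 2 * j * τ) ≠ 0) :
    HasSum (fun s : ℤ => Dp τ a n s * Ww τ b n s) (Tt τ b n * (Ph τ a b n - Ph τ (-a) b n) -
     (e2 ((n+1) * (a+b)) * (At τ a b n * Pf τ (a+b)) - e2 ((n+1) * (-a+b)) * (At τ (-a) b n * Pf τ (-a+b)))) := by
  have c1 := core2 τ a b hτ n
  have c2 := core2 τ (-a) b hτ n
  rw [← core1 τ a b hτ n h] at c1
  rw [← core1 τ (-a) b hτ n h'] at c2
  have F : (fun s : ℤ => Dp τ a n s * Ww τ b n s) = fun s : ℤ =>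
      e2 (s * b - τ * (s^2/(2*n+1))) * psi τ n a s * Ss τ n s -
      e2 (s * b - τ * (s^2/(2*n+1))) * psi τ n (-a) s * Ss τ n s := by
    funext s
    rw [Dp, Ww, psi_neg]; ring
  rw [F]
  exact hs_of (c1.sub c2) (fun _ => rfl) (by ring)

/-- The quadrant-restricted family. -/
lemma summable_Hq (τ b : ℂ) (hτ : 0 < τ.im) (n : ℕ) (c : ℤ) :
    Summable fun x : ℤ × ℤ => if 0 ≤ x.1 * x.2 then Hh τ b n ((2*n+1)*x.1 + c) (x.1 + x.2) else 0 := by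
  have hpi := Real.pi_pos
  set y := 2 * Real.pi * τ.im with hy
  have hy0 : 0 < y := by positivity
  set B := 2 * Real.pi * b.im with hB
  apply Summable.of_norm
  apply summable2 _ y (-(2*n+1)*B + y*(2*n+1)) (y*(2*n+1) - 2*y*c) (-c * B + y*c^2/(2*n+1)) hy0
  intro r l
  simp only
  split_ifs with hrl
  swap
  · rw [norm_zero]; exact (Real.exp_pos _).le
  have h2 : (0:ℝ) ≤ r * l := by exact_mod_cast hrl
  rw [Hh, hl, mul_left_comm, norm_mul, norm_sign, one_mul, ← e2_add]
  have h4 := norm_e2' 0 b τ 0 ((2*n+1)*r + c) ((2*n+1)*r^2 + (r+l)^2 + 2*(2*n+1)*r*l - (2*n+1)*(r+l)+2*l*c - c^2/(2*n+1))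
  have hN : (2*n+1:ℂ) ≠ 0 := by exact_mod_cast (by omega : 2*n+1 ≠ 0)
  push_cast at h4
  have e : ((((2*n+1)*r + c:ℤ):ℂ) * b - τ * ((((2*n+1)*r + c:ℤ):ℂ)^2/(2*n+1)) + τ * (((r+l:ℤ):ℂ)^2 - (2*n+1)*((r+l:ℤ):ℂ) + 2*((r+l:ℤ):ℂ)*(((2*n+1)*r + c:ℤ):ℂ)))
    = 0 * 0 + ((2*n+1)*r + c) * b + τ * ((2*n+1)*r^2 + (r+l)^2 + 2*(2*n+1)*r*l - (2*n+1)*(r+l)+2*l*c - c^2/(2*n+1)) := by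
    push_cast; field_simp; ring
  rw [e, h4]
  apply Real.exp_le_exp.2
  have h5 : 0 ≤ y * (2*n+1) * (r:ℝ)^2 + 2 * y * (r * l) + 2*y*(2*n+1)*(r*l) := by
    positivity
  have e1 : 2 * Real.pi * (0 * (0:ℂ).im + ((2*n+1)*r + c) * b.im + ((2*n+1)*r^2 + (r+l)^2 + 2*(2*n+1)*r*l - (2*n+1)*(r+l)+2*l*c - c^2/(2*n+1)) * τ.im)
    = ((2*n+1)*r + c) * B + ((2*n+1)*r^2 + (r+l)^2 + 2*(2*n+1)*r*l - (2*n+1)*(r+l)+2*l*c - c^2/(2*n+1)) * y := by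
    simp only [hB, hy]; ring
  rw [e1]
  have h6 : 0 ≤ y * (r:ℝ)^2 := by positivity
  have e2 : y * (c:ℝ)^2/(2*n+1) = y * (c^2/(2*n+1)) := by ring
  rw [e2]
  linear_combination h5

lemma summable_Q1 (τ b : ℂ) (hτ : 0 < τ.im) (n : ℕ) (c : ℤ) :
    Summable fun x : ℕ × ℕ => Hh τ b n ((2*n+1)*(x.1+1) + c) (x.1 + x.2 + 1) := by
  have h := (summable_Hq τ b hτ n c).comp_injective (i := fun x : ℕ × ℕ => ((x.1:ℤ)+1, (x.2:ℤ)))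
    (by rintro ⟨u,v⟩ ⟨u',v'⟩ h; simp at h; ext <;> simp [h])
  refine h.congr fun x => ?_
  simp only [Function.comp]
  rw [if_pos (by positivity)]
  congr 1; ring

lemma summable_Q2 (τ b : ℂ) (hτ : 0 < τ.im) (n : ℕ) (c : ℤ) :
    Summable fun x : ℕ × ℕ => Hh τ b n (-((2*n+1)*x.1) + c) (-(x.1 + x.2 + 1)) := by
  have h := (summable_Hq τ b hτ n c).comp_injective (i := fun x : ℕ × ℕ => (-(x.1:ℤ), -((x.2:ℤ)+1)))
    (by rintro ⟨u,v⟩ ⟨u',v'⟩ h; simp at h; ext <;> simp [h])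
  refine h.congr fun x => ?_
  simp only [Function.comp]
  rw [if_pos (by rw [neg_mul_neg]; positivity)]
  congr 1 <;> ring

def Q1 (τ b : ℂ) (n : ℕ) (c : ℤ) : ℂ := ∑' x : ℕ × ℕ, Hh τ b n ((2*n+1)*(x.1+1) + c) (x.1 + x.2 + 1)
def Q2 (τ b : ℂ) (n : ℕ) (c : ℤ) : ℂ := ∑' x : ℕ × ℕ, Hh τ b n (-((2*n+1)*x.1) + c) (-(x.1 + x.2 + 1))

lemma hasSum_antidiag (f : ℕ × ℕ → ℂ) (hf : Summable f) :
    HasSum (fun j : ℕ => ∑ r ∈ Finset.range (j+1), f (r, j - r)) (∑' x, f x) := by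
  have h := (Finset.HasAntidiagonal.sigmaAntidiagonalEquivProd (A := ℕ)).hasSum_iff.2 hf.hasSum
  have h2 := h.sigma (fun j => hasSum_fintype _)
  have F : (fun j : ℕ => ∑ r ∈ Finset.range (j+1), f (r, j - r)) = fun j : ℕ =>
      ∑ c : ↥(Finset.HasAntidiagonal.antidiagonal j), f c.1 := by
    funext j
    rw [← Finset.Nat.sum_antidiagonal_eq_sum_range_succ_mk, Finset.sum_coe_sort (Finset.HasAntidiagonal.antidiagonal j) f]
  rw [F]; exact h2

lemma hasSum_Q1 (τ b : ℂ) (hτ : 0 < τ.im) (n : ℕ) (c : ℤ) :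
    HasSum (fun j : ℕ => ∑ r ∈ Finset.range (j+1), Hh τ b n ((2*n+1)*(r+1) + c) (j + 1)) (Q1 τ b n c) := by
  have h := hasSum_antidiag _ (summable_Q1 τ b hτ n c)
  refine hs_of h (fun j => ?_) rfl
  apply Finset.sum_congr rfl
  intro r hr
  rw [Finset.mem_range] at hr
  simp only
  congr 1; omega

lemma hasSum_Q2 (τ b : ℂ) (hτ : 0 < τ.im) (n : ℕ) (c : ℤ) :
    HasSum (fun j : ℕ => ∑ r ∈ Finset.range (j+1), Hh τ b n (-((2*n+1)*r) + c) (-(j + 1))) (Q2 τ b n c) := by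
  have h := hasSum_antidiag _ (summable_Q2 τ b hτ n c)
  refine hs_of h (fun j => ?_) rfl
  apply Finset.sum_congr rfl
  intro r hr
  rw [Finset.mem_range] at hr
  simp only
  congr 1; omega

lemma tsum_ge (F : ℤ → ℂ) (p : ℤ) : ∑' l : ℤ, (if p ≤ l then F l else 0) = ∑' v : ℕ, F (p + v) := by
  have hi : Function.Injective (fun v : ℕ => p + (v:ℤ)) := fun u v h => by simpa using h
  rw [← hi.tsum_eq]
  · congr 1; funext v; rw [if_pos (by omega)]
  · intro l hl
    simp only [Function.mem_support, ne_eq, ite_eq_right_iff, Classical.not_imp] at hl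
    exact ⟨(l - p).toNat, by simp; omega⟩

lemma tsum_le (F : ℤ → ℂ) (p : ℤ) : ∑' l : ℤ, (if l ≤ p then F l else 0) = ∑' v : ℕ, F (p - v) := by
  have hi : Function.Injective (fun v : ℕ => p - (v:ℤ)) := fun u v h => by simpa using h
  rw [← hi.tsum_eq]
  · congr 1; funext v; rw [if_pos (by omega)]
  · intro l hl
    simp only [Function.mem_support, ne_eq, ite_eq_right_iff, Classical.not_imp] at hl
    exact ⟨(p - l).toNat, by simp; omega⟩

lemma tsum_Hh (τ b : ℂ) (n : ℕ) (s : ℤ) : ∑' l : ℤ, Hh τ b n s l = 0 := by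
  simp only [Hh]; rw [tsum_mul_left, tsum_hl, mul_zero]

lemma summable_Hh (τ b : ℂ) (hτ : 0 < τ.im) (n : ℕ) (s : ℤ) : Summable fun l : ℤ => Hh τ b n s l := by
  simp only [Hh]; exact (summable_hl τ hτ n s).of_norm.mul_left _

lemma summable_ite (F : ℤ → ℂ) (hF : Summable F) (p : ℤ → Prop) [DecidablePred p] :
    Summable fun l : ℤ => if p l then F l else 0 := by
  refine (hF.indicator {l : ℤ | p l}).congr fun l => ?_
  simp [Set.indicator_apply]

def Vv (τ b : ℂ) (n : ℕ) (c r : ℤ) : ℂ := ∑' l : ℤ, if l ≤ r - 1 then Hh τ b n ((2*n+1)*r + c) l else 0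

lemma hasSum_Vv (τ b : ℂ) (hτ : 0 < τ.im) (n : ℕ) (c : ℤ) :
    HasSum (fun r : ℤ => Vv τ b n c r) (Q2 τ b n c - Q1 τ b n c) := by
  have a1 : ∀ u : ℕ, Vv τ b n c (-(u:ℤ)) = ∑' v : ℕ, Hh τ b n (-((2*n+1)*u) + c) (-(u + v + 1)) := by
    intro u
    rw [Vv, tsum_le]
    congr 1; funext v; congr 1 <;> ring
  have a2 : ∀ u : ℕ, Vv τ b n c ((u:ℤ)+1) = -∑' v : ℕ, Hh τ b n ((2*n+1)*(u+1) + c) (u + v + 1) := by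
    intro u
    have hs := summable_Hh τ b hτ n ((2*n+1)*(u+1) + c)
    have h0 := tsum_Hh τ b n ((2*n+1)*(u+1) + c)
    have : ∑' v : ℕ, Hh τ b n ((2*n+1)*(u+1) + c) (u + v + 1) = ∑' l : ℤ, (if (u:ℤ)+1 ≤ l then Hh τ b n ((2*n+1)*(u+1) + c) l else 0) := by
      rw [tsum_ge]; congr 1; funext v; congr 1; ring
    rw [this, Vv, eq_neg_iff_add_eq_zero, ← Summable.tsum_add (summable_ite _ hs _) (summable_ite _ hs _)]
    refine Eq.trans ?_ h0
    congr 1; funext l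
    by_cases hl : (u:ℤ)+1 ≤ l
    · rw [if_neg (by omega), if_pos hl, zero_add]
    · rw [if_pos (by omega), if_neg hl, add_zero]
  rw [← (Equiv.neg ℤ).hasSum_iff, sub_eq_add_neg]
  apply HasSum.of_nat_of_neg_add_one
  · have := (summable_Q2 τ b hτ n c).prod.hasSum
    rw [← (summable_Q2 τ b hτ n c).tsum_prod] at this
    exact hs_of this (fun u => a1 u) rfl
  · have := (summable_Q1 τ b hτ n c).prod.hasSum.neg
    rw [← (summable_Q1 τ b hτ n c).tsum_prod] at this
    refine hs_of this (fun u => ?_) rfl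
    simp only [Function.comp]
    rw [← a2 u, Equiv.neg_apply, neg_neg]

lemma Ww_eq (τ b : ℂ) (n : ℕ) (s p : ℤ) (h1 : (2*n+1)*p ≤ s) (h2 : s < (2*n+1)*(p+1)) :
    Ww τ b n s = ∑' l : ℤ, if l ≤ p then Hh τ b n s l else 0 := by
  rw [Ww, Ss, ← tsum_mul_left]
  congr 1; funext l
  have : (2*n+1)*l ≤ s ↔ l ≤ p := by
    constructor
    · intro h
      by_contra h3
      have : (2*n+1)*(p+1) ≤ (2*n+1)*l := mul_le_mul_of_nonneg_left (by omega) (by omega)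
      omega
    · intro h
      have : (2*n+1)*l ≤ (2*n+1)*p := mul_le_mul_of_nonneg_left (by omega) (by omega)
      omega
  simp only [this, Hh]
  split_ifs <;> simp

lemma Hh_diag (τ b : ℂ) (n : ℕ) (κ r : ℤ) : Hh τ b n ((2*n+1)*r + κ) r =
    e2 (κ * b - τ * (κ^2/(2*n+1))) * ((-1)^r * e2 ((2*n+1)*r * b + τ * ((2*n+2)*r^2 - (2*n+1)*r))) := by
  have hN : (2*n+1:ℂ) ≠ 0 := by exact_mod_cast (by omega : 2*n+1 ≠ 0)
  rw [Hh, hl, mul_left_comm, mul_left_comm (e2 _), ← e2_add, ← e2_add]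
  congr 2
  push_cast; field_simp; ring

lemma hasSum_Wpos (τ b : ℂ) (hτ : 0 < τ.im) (n : ℕ) (κ : ℤ) (h1 : 0 ≤ κ) (h2 : κ < 2*n+1) :
    HasSum (fun r : ℤ => Ww τ b n ((2*n+1)*r + κ))
      (e2 (κ * b - τ * (κ^2/(2*n+1))) * Tt τ b n + (Q2 τ b n κ - Q1 τ b n κ)) := by
  have H := ((summable_T τ b hτ n).of_norm.hasSum.mul_left (e2 (κ * b - τ * (κ^2/(2*n+1))))).add (hasSum_Vv τ b hτ n κ)
  refine hs_of H (fun r => ?_) rfl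
  rw [Ww_eq τ b n _ r (by omega) (by rw [mul_add]; omega), ← Hh_diag, Vv]
  have hs := summable_Hh τ b hτ n ((2*n+1)*r + κ)
  have : Hh τ b n ((2*n+1)*r + κ) r = ∑' l : ℤ, if l = r then Hh τ b n ((2*n+1)*r + κ) r else 0 := by
    rw [tsum_ite_eq]
  rw [this, ← Summable.tsum_add (hasSum_ite_eq r _).summable (summable_ite _ hs _)]
  congr 1; funext l
  rcases lt_trichotomy l r with h | h | h
  · rw [if_pos (by omega), if_neg (by omega), if_pos (by omega), zero_add]
  · rw [if_pos (by omega), if_pos (by omega), if_neg (by omega), h, add_zero]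
  · rw [if_neg (by omega), if_neg (by omega), if_neg (by omega), zero_add]

lemma hasSum_Wneg (τ b : ℂ) (hτ : 0 < τ.im) (n : ℕ) (κ : ℤ) (h1 : 0 < κ) (h2 : κ ≤ 2*n+1) :
    HasSum (fun r : ℤ => Ww τ b n ((2*n+1)*r + (2*n+1-κ)))
      (Q2 τ b n (-κ) - Q1 τ b n (-κ)) := by
  have H := (Equiv.addRight (1:ℤ)).hasSum_iff.2 (hasSum_Vv τ b hτ n (-κ))
  refine hs_of H (fun r => ?_) rfl
  rw [Ww_eq τ b n _ r (by omega) (by rw [mul_add]; omega)]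
  have e : (2*n+1)*(r+1) + -κ = (2*n+1)*r + (2*n+1-κ) := by ring
  change _ = Vv τ b n (-κ) (r+1)
  rw [Vv, e]
  congr 1; funext l
  by_cases hlr : l ≤ r
  · rw [if_pos hlr, if_pos (by omega)]
  · rw [if_neg hlr, if_neg (by omega)]

lemma range_split (n : ℕ) (g : ℕ → ℂ) : ∑ k ∈ Finset.range (2*n+1), g k =
    g 0 + ∑ i ∈ Finset.range n, (g (i+1) + g (2*n+1-(i+1))) := by
  rw [Finset.sum_range_succ', two_mul, Finset.sum_range_add, add_comm, Finset.sum_add_distrib]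
  congr 2
  rw [← Finset.sum_range_reflect]
  apply Finset.sum_congr rfl
  intro i hi
  rw [Finset.mem_range] at hi
  congr 1; omega

lemma residue_split (n : ℕ) (F : ℤ → ℂ) (x : ℂ) (hF : HasSum F x) :
    x = ∑ k ∈ Finset.range (2*n+1), ∑' r : ℤ, F ((2*n+1)*r + k) := by
  have h := ((Equiv.prodComm _ _).trans (Int.divModEquiv (2*n+1)).symm).hasSum_iff.2 hF
  rw [← h.tsum_eq, h.summable.tsum_prod, tsum_fintype, Finset.sum_range]
  apply Finset.sum_congr rfl
  intro k _
  congr 1; funext r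
  simp only [Function.comp, Equiv.trans_apply, Equiv.prodComm_apply, Prod.swap_prod_mk, Int.divModEquiv_symm_apply]
  congr 1
  push_cast; ring

lemma main_E (τ a b : ℂ) (hτ : 0 < τ.im) (n : ℕ) (h : ∀ j : ℤ, 1 - e2 (a + b + 2 * j * τ) ≠ 0)
    (h' : ∀ j : ℤ, 1 - e2 (-a + b + 2 * j * τ) ≠ 0) :
    Tt τ b n * (Ph τ a b n - Ph τ (-a) b n) -
     (e2 ((n+1) * (a+b)) * (At τ a b n * Pf τ (a+b)) - e2 ((n+1) * (-a+b)) * (At τ (-a) b n * Pf τ (-a+b))) =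
    - (∑' j : ℕ, ∑ r ∈ Finset.range (j+1), ∑ κ ∈ Finset.range (n+1),
       (Hh τ b n ((2*n+1)*(r+1) + κ) (j+1) + Hh τ b n (-((2*n+1)*r) + -κ) (-(j+1))) * Dp τ a n κ)
    + (∑' j : ℕ, ∑ r ∈ Finset.range (j+1), ∑ κ ∈ Finset.range (n+1),
       (Hh τ b n ((2*n+1)*(r+1) + -κ) (j+1) + Hh τ b n (-((2*n+1)*r) + κ) (-(j+1))) * Dp τ a n κ)
    + Tt τ b n * ∑ κ ∈ Finset.Icc 1 n, e2 (κ * b - τ * (κ^2/(2*n+1))) * Dp τ a n κ := by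
  have A1 : (∑' j : ℕ, ∑ r ∈ Finset.range (j+1), ∑ κ ∈ Finset.range (n+1),
       (Hh τ b n ((2*n+1)*(r+1) + κ) (j+1) + Hh τ b n (-((2*n+1)*r) + -κ) (-(j+1))) * Dp τ a n κ)
      = ∑ κ ∈ Finset.range (n+1), (Q1 τ b n κ + Q2 τ b n (-κ)) * Dp τ a n κ := by
    have := hasSum_sum (s := Finset.range (n+1)) (fun (κ : ℕ) _ =>
      ((hasSum_Q1 τ b hτ n κ).add (hasSum_Q2 τ b hτ n (-κ))).mul_right (Dp τ a n κ))
    rw [← this.tsum_eq]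
    congr 1; funext j
    rw [Finset.sum_comm]
    apply Finset.sum_congr rfl
    intro κ _
    rw [← Finset.sum_add_distrib, Finset.sum_mul]
  have A2 : (∑' j : ℕ, ∑ r ∈ Finset.range (j+1), ∑ κ ∈ Finset.range (n+1),
       (Hh τ b n ((2*n+1)*(r+1) + -κ) (j+1) + Hh τ b n (-((2*n+1)*r) + κ) (-(j+1))) * Dp τ a n κ)
      = ∑ κ ∈ Finset.range (n+1), (Q1 τ b n (-κ) + Q2 τ b n κ) * Dp τ a n κ := by
    have := hasSum_sum (s := Finset.range (n+1)) (fun (κ : ℕ) _ =>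
      ((hasSum_Q1 τ b hτ n (-κ)).add (hasSum_Q2 τ b hτ n κ)).mul_right (Dp τ a n κ))
    rw [← this.tsum_eq]
    congr 1; funext j
    rw [Finset.sum_comm]
    apply Finset.sum_congr rfl
    intro κ _
    rw [← Finset.sum_add_distrib, Finset.sum_mul]
  have A3 := residue_split n _ _ (anti τ a b hτ n h h')
  have A4 : ∑ κ ∈ Finset.Icc 1 n, e2 (κ * b - τ * (κ^2/(2*n+1))) * Dp τ a n κ =
      ∑ i ∈ Finset.range n, e2 (((i+1:ℕ):ℂ) * b - τ * (((i+1:ℕ):ℂ)^2/(2*n+1))) * Dp τ a n ((i+1:ℕ):ℤ) := by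
    rw [Finset.range_eq_Ico, Finset.sum_Ico_add' (fun κ : ℕ => e2 (κ * b - τ * (κ^2/(2*n+1))) * Dp τ a n κ) 0 n 1]
    rfl
  rw [A3, A1, A2, A4, range_split, Finset.sum_range_succ', Finset.sum_range_succ']
  simp only [Dp_mul, tsum_mul_left]
  simp only [Nat.cast_zero, Dp_zero, zero_mul, mul_zero, add_zero, zero_add]
  rw [Finset.mul_sum, ← Finset.sum_neg_distrib, ← Finset.sum_add_distrib, ← Finset.sum_add_distrib]
  apply Finset.sum_congr rfl
  intro i hi
  rw [Finset.mem_range] at hi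
  have w1 := (hasSum_Wpos τ b hτ n ((i+1:ℕ):ℤ) (by omega) (by omega)).tsum_eq
  have w2 := (hasSum_Wneg τ b hτ n ((i+1:ℕ):ℤ) (by omega) (by omega)).tsum_eq
  have e : ((2*n+1-(i+1):ℕ):ℤ) = 2*n+1-((i+1:ℕ):ℤ) := by omega
  have d : Dp τ a n (2*n+1-((i+1:ℕ):ℤ)) = - Dp τ a n ((i+1:ℕ):ℤ) := by
    rw [← Dp_neg, ← Dp_mul τ a n 1 (-((i+1:ℕ):ℤ))]; congr 1; ring
  rw [e, d, w1, w2]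
  push_cast
  ring

lemma exp_e2 (x z : ℂ) (h : x = 2 * Real.pi * Complex.I * z) : Complex.exp x = e2 z := by
  rw [e2, h]

lemma e2_mul (z w : ℂ) : e2 z * e2 w = e2 (z + w) := (e2_add z w).symm

lemma e2_int (k : ℤ) : e2 k = 1 := by
  rw [e2, Complex.exp_eq_one_iff]; exact ⟨k, by ring⟩

lemma e2_half : e2 (1/2) = -1 := by
  rw [e2, ← Complex.exp_pi_mul_I]; congr 1; ring

lemma e2_quarter : e2 (1/4) = Complex.I := by
  rw [e2, show (2 * Real.pi * Complex.I * (1/4) : ℂ) = Real.pi / 2 * Complex.I by ring, Complex.exp_pi_div_two_mul_I]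

lemma sign_e2 (k : ℤ) : (-1:ℂ)^k = e2 (k / 2) := by
  rw [← e2_half, e2_zpow]; congr 1; ring

lemma e2_ne_one (τ w : ℂ) (h : ¬ InLattice (2 * τ) w) (j : ℤ) : 1 - e2 (w + 2 * j * τ) ≠ 0 := by
  intro h0
  have h1 : e2 (w + 2 * j * τ) = 1 := (sub_eq_zero.1 h0).symm
  rw [e2, Complex.exp_eq_one_iff] at h1
  obtain ⟨k, hk⟩ := h1
  apply h
  refine ⟨k, -j, ?_⟩
  have : w + 2 * j * τ = k := by
    have hp := Complex.two_pi_I_ne_zero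
    apply mul_left_cancel₀ hp
    rw [hk]; ring
  push_cast
  linear_combination this

lemma inLattice_neg (τ w : ℂ) (h : ¬ InLattice τ w) : ¬ InLattice τ (-w) := by
  rintro ⟨a, b, hab⟩
  apply h
  refine ⟨-a, -b, ?_⟩
  push_cast
  linear_combination -hab

def Th (τ w : ℂ) : ℂ := ∑' k : ℤ, (-1)^k * e2 (τ * (k^2 - k) + k * w)

def Ee (τ : ℂ) : ℂ := ∏' n : ℕ, (1 - ((e2 τ)^2)^(n+1))

lemma norm_q (τ : ℂ) (hτ : 0 < τ.im) : ‖e2 τ‖ < 1 := by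
  rw [norm_e2, Real.exp_lt_one_iff]
  have := Real.pi_pos
  have : 0 < 2 * Real.pi * τ.im := by positivity
  linarith

lemma Ee_ne (τ : ℂ) (hτ : 0 < τ.im) : Ee τ ≠ 0 := by
  apply tprod_ne
  rw [norm_pow]
  have := norm_q τ hτ
  have := norm_nonneg (e2 τ)
  nlinarith

lemma Th_mul_Pf (τ w : ℂ) (hτ : 0 < τ.im) (h : ∀ j : ℤ, 1 - e2 (w + 2 * j * τ) ≠ 0) :
    Th τ w * Pf τ w = Ee τ ^ 3 := by
  have e1 : ∀ k : ℤ, (-1)^k*(e2 τ)^(k^2-k)*(e2 w)^k = (-1)^k * e2 (τ * (k^2 - k) + k * w) := by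
    intro k; rw [e2_zpow, e2_zpow, mul_assoc, e2_mul]; congr 2; push_cast; ring
  have e0 : ∀ k : ℤ, 1 - e2 w * ((e2 τ)^2)^k = 1 - e2 (w + 2*k*τ) := by
    intro k; rw [← zpow_natCast, ← zpow_mul, e2_zpow, e2_mul]; congr 2; push_cast; ring
  have e2' : ∀ k : ℤ, (-1)^k*(e2 τ)^(k^2+k)/(1-e2 w*((e2 τ)^2)^k) =
      (-1)^k * e2 (τ * (k^2 + k)) / (1 - e2 (w + 2*k*τ)) := by
    intro k; rw [e0, e2_zpow]; congr 3; push_cast; ring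
  have := pf_main (e2 τ) (e2 w) (e2_ne _) (norm_q τ hτ) (e2_ne _) (fun k => by rw [e0]; exact h k)
    ?_ ?_
  · simp only [e1, e2'] at this
    exact this
  · simp only [e1]
    refine (summable_gauss τ w 0 hτ 1 (-1) 1 0 (by positivity)).congr fun l => ?_
    rw [norm_mul, norm_sign, one_mul]; congr 2; push_cast; ring
  · simp only [e2']
    exact summable_Pf τ w hτ h

lemma Pf_eq (τ w : ℂ) (hτ : 0 < τ.im) (h : ∀ j : ℤ, 1 - e2 (w + 2 * j * τ) ≠ 0) :
    Th τ w ≠ 0 ∧ Ee τ ^ 3 / Th τ w = Pf τ w := by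
  have H := Th_mul_Pf τ w hτ h
  have h0 : Th τ w ≠ 0 := by
    intro h0
    rw [h0, zero_mul] at H
    exact pow_ne_zero 3 (Ee_ne τ hτ) H.symm
  exact ⟨h0, by rw [← H]; field_simp⟩

lemma eta_eq (τ : ℂ) : eta (2*τ) ^ 3 = e2 (τ/4) * Ee τ ^ 3 := by
  have : eta (2*τ) = e2 (τ/12) * Ee τ := by
    rw [eta, Ee, qpow_eq]
    congr 1
    · congr 1; ring
    · congr 1; funext n
      rw [qpow_eq, ← pow_mul, ← zpow_natCast, e2_zpow]; congr 2; push_cast; ring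
  rw [this, mul_pow]; congr 1
  rw [← zpow_natCast, e2_zpow]; congr 1; push_cast; ring

lemma mumford_eq (τ w : ℂ) : mumford 1 1 (2*τ) w = -Complex.I * e2 (τ/4 - w/2) * Th τ w := by
  rw [mumford, Th, ← (Equiv.subRight (1:ℤ)).tsum_eq, ← tsum_mul_left]
  congr 1; funext k
  rw [Equiv.subRight_apply, sign_e2]
  have : -Complex.I = e2 (-1/4) := by
    have : e2 (-1/4) = e2 (1/4) * e2 (1/2) * e2 ((-1:ℤ):ℂ) := by
      rw [e2_mul, e2_mul]; congr 1; push_cast; ring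
    rw [this, e2_int, e2_half, e2_quarter]; ring
  rw [this, e2_mul, e2_mul, e2_mul]
  apply exp_e2
  push_cast
  ring

lemma mumford_neg (τ w : ℂ) : mumford 1 1 (2*τ) (-w) = - mumford 1 1 (2*τ) w := by
  rw [mumford, mumford, ← (Equiv.subLeft (-1:ℤ)).tsum_eq, ← tsum_neg]
  congr 1; funext k
  rw [Equiv.subLeft_apply]
  have e1 : ∀ x : ℂ, -Complex.exp (2 * Real.pi * Complex.I * x) = e2 (x + 1/2 + ((-k-1 : ℤ):ℂ)) := by
    intro x; rw [e2_add, e2_add, e2_int, e2_half, e2]; ring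
  have e2' : Real.pi * Complex.I * (2*τ) * ((k : ℂ) + ((1:ℕ) : ℂ) / 2) ^ 2 +
      2 * Real.pi * Complex.I * ((k : ℂ) + ((1:ℕ) : ℂ) / 2) * (w + ((1:ℕ) : ℂ) / 2) =
      2 * Real.pi * Complex.I * (τ * (k+1/2)^2 + (k + 1/2)*(w+1/2)) := by push_cast; ring
  rw [e2', e1]
  apply exp_e2
  push_cast
  ring

/-- The eta quotient in terms of the partial fraction series. -/
lemma eta_div (τ w : ℂ) (hτ : 0 < τ.im) (h : ∀ j : ℤ, 1 - e2 (w + 2 * j * τ) ≠ 0) :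
    -Complex.I * eta (2*τ) ^ 3 / mumford 1 1 (2*τ) w = e2 (w/2) * Pf τ w := by
  obtain ⟨h0, h1⟩ := Pf_eq τ w hτ h
  rw [eta_eq, mumford_eq, ← h1]
  have : e2 (τ/4) = e2 (w/2) * e2 (τ/4 - w/2) := by rw [e2_mul]; congr 1; ring
  rw [this]
  have := e2_ne (τ/4 - w/2)
  have := Complex.I_ne_zero
  generalize e2 (τ/4 - w/2) = X at *
  field_simp

def Cc (τ b : ℂ) (n : ℕ) : ℂ := e2 (-((2*n+1)^2*b/(2*(2*n+2))) + τ*((2*n+1)^2/(4*(2*n+2))))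

lemma ne1 (n : ℕ) : (2*n+1:ℂ) ≠ 0 := by exact_mod_cast (by omega : 2*n+1 ≠ 0)
lemma ne2 (n : ℕ) : (2*n+2:ℂ) ≠ 0 := by exact_mod_cast (by omega : 2*n+2 ≠ 0)

lemma jThetaM_T (τ b : ℂ) (n : ℕ) :
    jThetaM (-(2*n+1)) (2*n+2) τ ((2*n+1)*b/(2*n+2)) = Cc τ b n * Tt τ b n := by
  have := ne2 n
  rw [jThetaM, Tt, ← tsum_mul_left]
  congr 1; funext l
  rw [qpow_eq, exp_e2 _ _ rfl, mul_assoc, e2_mul, mul_left_comm (Cc _ _ _), Cc, e2_mul]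
  congr 2
  field_simp
  ring

lemma jThetaM_A (τ a b : ℂ) (n : ℕ) :
    jThetaM (2*n+1) (2*n+2) τ (b/(2*n+2) + a) =
      e2 ((2*n+1)*b/(2*(2*n+2)) + (2*n+1)*a/2 + τ*((2*n+1)^2/(4*(2*n+2)))) * At τ a b n := by
  have := ne2 n
  rw [jThetaM, At, ← tsum_mul_left]
  congr 1; funext l
  rw [qpow_eq, exp_e2 _ _ rfl, mul_assoc, e2_mul, mul_left_comm (e2 _), e2_mul]
  congr 2
  field_simp
  ring

lemma J_C (τ a b : ℂ) (n : ℕ) :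
    e2 ((a+b)/2) * jThetaM (2*n+1) (2*n+2) τ (b/(2*n+2) + a) =
      Cc τ b n * (e2 ((n+1)*(a+b)) * At τ a b n) := by
  have := ne2 n
  rw [jThetaM_A, ← mul_assoc, ← mul_assoc, Cc, e2_mul, e2_mul]
  congr 2
  field_simp
  ring

lemma Phi_eq (τ z1 z2 : ℂ) (n : ℕ) : Phi ((2*n+1)/2) 0 (2*τ) (2*z1) (2*z2) 0 =
    Ph τ (z1+z2) (z1-z2) n - Ph τ (-(z1+z2)) (z1-z2) n := by
  rw [Phi, Phi1, Phi2, Ph, Ph]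
  simp only [mul_zero, Complex.exp_zero, one_mul]
  congr 1
  · congr 1; funext j
    rw [qpow_eq, qpow_eq, exp_e2 _ _ rfl, e2_mul, e2_mul]
    congr 2
    · ring
    · congr 1; ring
  · congr 1; funext j
    rw [qpow_eq, qpow_eq, exp_e2 _ (-((2*n+1)/2 * j * (2*z1+2*z2) + 0 * (2*z2))) (by ring), e2_mul, e2_mul]
    congr 2
    · ring
    · congr 1; ring

lemma jTheta1 (τ a : ℂ) (n : ℕ) (k : ℤ) : jTheta k ((2*n+1)/2) (2*τ) (2*a) = psi τ n a k := by
  have := ne1 n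
  rw [jTheta, psi]
  congr 1; funext j
  rw [qpow_eq, exp_e2 _ _ rfl, e2_mul]
  congr 1
  field_simp
  ring

lemma jTheta2 (τ a : ℂ) (n : ℕ) (k : ℤ) : jTheta (2*k) (2*n+1) τ a = psi τ n a k := by
  have := ne1 n
  rw [jTheta, psi]
  congr 1; funext j
  rw [qpow_eq, exp_e2 _ _ rfl, e2_mul]
  congr 1
  field_simp
  ring

lemma sum_even (n : ℕ) (f : ℕ → ℂ) :
    ∑ k ∈ (Finset.range (2*n+1)).filter (fun k => Even k), f k = ∑ κ ∈ Finset.range (n+1), f (2*κ) := by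
  symm
  refine Finset.sum_nbij (fun κ => 2*κ) ?_ ?_ ?_ (fun _ _ => rfl)
  · intro κ hκ; simp at hκ ⊢; omega
  · intro x _ y _ h; simpa using h
  · intro k hk
    simp at hk
    obtain ⟨h1, r, rfl⟩ := hk
    refine ⟨r, ?_, ?_⟩ <;> simp <;> omega

lemma sum_Icc_shift (j : ℕ) (f : ℕ → ℂ) :
    ∑ r ∈ Finset.Icc 1 (j+1), f r = ∑ r ∈ Finset.range (j+1), f (r+1) := by
  rw [Finset.range_eq_Ico, Finset.sum_Ico_add' f 0 (j+1) 1]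
  rfl

lemma sgn_nat (j : ℕ) : (-1:ℂ)^(j+1) = (-1:ℂ)^((j:ℤ)+1) := by
  rw [← zpow_natCast]; push_cast; rfl

lemma sgn_nat' (j : ℕ) : (-1:ℂ)^(j+1) = (-1:ℂ)^(-((j:ℤ)+1)) := by
  rw [sign_neg, sgn_nat]

lemma comb (s P Q U V C R1 S1 R2 S2 : ℂ) (h1 : P*Q*U = C*R1*S1) (h2 : P*Q*V = C*R2*S2) :
    P * (s * Q * (U + V)) = C * (R1 * (s * S1) + R2 * (s * S2)) := by
  linear_combination s * h1 + s * h2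

lemma term1 (τ b : ℂ) (n j r κ : ℕ) (m : ℂ) (hm : m = (2*n+1)/2) (s1 s2 : ℤ)
    (h1 : s1 = (2*n+1)*(r+1)+κ) (h2 : s2 = -((2*n+1)*r) + -κ) :
    qpow τ (-m/(2*(2*m+1))) * e2 (m*b/(2*m+1)) * ((-1 : ℂ) ^ (j + 1) *
      qpow τ ((2 * m + 1) * ((j : ℂ) + 1) ^ 2 -
        (4 * m * ((j : ℂ) + 1 - ((r+1:ℕ) : ℂ)) + 2 * m - ((2*κ:ℕ) : ℂ)) ^ 2 / (8 * m)) *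
      (Complex.exp (Real.pi * Complex.I * (4 * m * ((r+1:ℕ) : ℂ) - 2 * m + ((2*κ:ℕ) : ℂ)) * b) *
          qpow τ (-(4 * m * ((r+1:ℕ) : ℂ) - 2 * m + ((2*κ:ℕ) : ℂ)) / 2) +
        Complex.exp (-(Real.pi * Complex.I) * (4 * m * ((r+1:ℕ) : ℂ) - 2 * m + ((2*κ:ℕ) : ℂ)) * b) *
          qpow τ ((4 * m * ((r+1:ℕ) : ℂ) - 2 * m + ((2*κ:ℕ) : ℂ)) / 2))) =
     Cc τ b n * (Hh τ b n s1 (j+1) + Hh τ b n s2 (-(j+1))) := by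
  have hN := ne1 n
  have hM := ne2 n
  have hM' : 2*m+1 = 2*n+2 := by rw [hm]; ring
  rw [exp_e2 _ ((4 * m * ((r+1:ℕ) : ℂ) - 2 * m + ((2*κ:ℕ) : ℂ)) * b / 2) (by ring),
    exp_e2 _ (-((4 * m * ((r+1:ℕ) : ℂ) - 2 * m + ((2*κ:ℕ) : ℂ)) * b / 2)) (by ring)]
  simp only [qpow_eq, e2_mul, Hh, hl, Cc, ← sgn_nat, ← sgn_nat']
  apply comb
  · rw [e2_mul, e2_mul, e2_mul, e2_mul]
    congr 1
    rw [hM', hm, h1]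
    push_cast
    field_simp
    ring
  · rw [e2_mul, e2_mul, e2_mul, e2_mul]
    congr 1
    rw [hM', hm, h2]
    push_cast
    field_simp
    ring

lemma term2 (τ b : ℂ) (n j r κ : ℕ) (m : ℂ) (hm : m = (2*n+1)/2) (s1 s2 : ℤ)
    (h1 : s1 = (2*n+1)*(r+1)+ -κ) (h2 : s2 = -((2*n+1)*r) + κ) :
    qpow τ (-m/(2*(2*m+1))) * e2 (m*b/(2*m+1)) * ((-1 : ℂ) ^ (j + 1) *
      qpow τ ((2 * m + 1) * ((j : ℂ) + 1) ^ 2 -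
        (4 * m * ((j : ℂ) + 1 - (r : ℂ)) - 2 * m + ((2*κ:ℕ) : ℂ)) ^ 2 / (8 * m)) *
      (Complex.exp (Real.pi * Complex.I * (4 * m * (r : ℂ) + 2 * m - ((2*κ:ℕ) : ℂ)) * b) *
          qpow τ (-(4 * m * (r : ℂ) + 2 * m - ((2*κ:ℕ) : ℂ)) / 2) +
        Complex.exp (-(Real.pi * Complex.I) * (4 * m * (r : ℂ) + 2 * m - ((2*κ:ℕ) : ℂ)) * b) *
          qpow τ ((4 * m * (r : ℂ) + 2 * m - ((2*κ:ℕ) : ℂ)) / 2))) =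
     Cc τ b n * (Hh τ b n s1 (j+1) + Hh τ b n s2 (-(j+1))) := by
  have hN := ne1 n
  have hM := ne2 n
  have hM' : 2*m+1 = 2*n+2 := by rw [hm]; ring
  rw [exp_e2 _ ((4 * m * (r : ℂ) + 2 * m - ((2*κ:ℕ) : ℂ)) * b / 2) (by ring),
    exp_e2 _ (-((4 * m * (r : ℂ) + 2 * m - ((2*κ:ℕ) : ℂ)) * b / 2)) (by ring)]
  simp only [qpow_eq, e2_mul, Hh, hl, Cc, ← sgn_nat, ← sgn_nat']
  apply comb
  · rw [e2_mul, e2_mul, e2_mul, e2_mul]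
    congr 1
    rw [hM', hm, h1]
    push_cast
    field_simp
    ring
  · rw [e2_mul, e2_mul, e2_mul, e2_mul]
    congr 1
    rw [hM', hm, h2]
    push_cast
    field_simp
    ring

end Helpers

theorem statement16 (m : ℝ) (n : ℕ) (hm : m = (2 * n + 1) / 2)
    (τ : ℂ) (hτ : 0 < τ.im) (z1 z2 : ℂ)
    (h1 : ¬ InLattice (2 * τ) (2 * z1)) (h2 : ¬ InLattice (2 * τ) (2 * z2)) :
    jThetaM (-(2 * (m : ℂ))) (2 * (m : ℂ) + 1) τ
          (2 * (m : ℂ) * (z1 - z2) / (2 * (m : ℂ) + 1)) *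
        Phi (m : ℂ) 0 (2 * τ) (2 * z1) (2 * z2) 0 =
      -Complex.I * eta (2 * τ) ^ 3 *
          (jThetaM (2 * (m : ℂ)) (2 * (m : ℂ) + 1) τ
              ((z1 - z2) / (2 * (m : ℂ) + 1) + z1 + z2) /
              mumford 1 1 (2 * τ) (2 * z1) +
            jThetaM (2 * (m : ℂ)) (2 * (m : ℂ) + 1) τ
              ((z1 - z2) / (2 * (m : ℂ) + 1) - z1 - z2) /
              mumford 1 1 (2 * τ) (2 * z2)) -
        qpow τ (-(m : ℂ) / (2 * (2 * (m : ℂ) + 1))) *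
          e2 ((m : ℂ) * (z1 - z2) / (2 * (m : ℂ) + 1)) *
          (∑' j : ℕ, ∑ r ∈ Finset.Icc 1 (j + 1),
            ∑ k ∈ (Finset.range (2 * n + 1)).filter (fun k => Even k),
              (-1 : ℂ) ^ (j + 1) *
                qpow τ ((2 * (m : ℂ) + 1) * ((j : ℂ) + 1) ^ 2 -
                  (4 * (m : ℂ) * ((j : ℂ) + 1 - (r : ℂ)) + 2 * (m : ℂ) - (k : ℂ)) ^ 2 /
                    (8 * (m : ℂ))) *
                (Complex.exp (Real.pi * Complex.I *
                      (4 * (m : ℂ) * (r : ℂ) - 2 * (m : ℂ) + (k : ℂ)) * (z1 - z2)) *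
                    qpow τ (-(4 * (m : ℂ) * (r : ℂ) - 2 * (m : ℂ) + (k : ℂ)) / 2) +
                  Complex.exp (-(Real.pi * Complex.I) *
                      (4 * (m : ℂ) * (r : ℂ) - 2 * (m : ℂ) + (k : ℂ)) * (z1 - z2)) *
                    qpow τ ((4 * (m : ℂ) * (r : ℂ) - 2 * (m : ℂ) + (k : ℂ)) / 2)) *
                (jTheta (k : ℂ) (2 * (m : ℂ)) τ (z1 + z2) -
                  jTheta (-(k : ℂ)) (2 * (m : ℂ)) τ (z1 + z2))) +
        qpow τ (-(m : ℂ) / (2 * (2 * (m : ℂ) + 1))) *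
          e2 ((m : ℂ) * (z1 - z2) / (2 * (m : ℂ) + 1)) *
          (∑' j : ℕ, ∑ r ∈ Finset.range (j + 1),
            ∑ k ∈ (Finset.range (2 * n + 1)).filter (fun k => Even k),
              (-1 : ℂ) ^ (j + 1) *
                qpow τ ((2 * (m : ℂ) + 1) * ((j : ℂ) + 1) ^ 2 -
                  (4 * (m : ℂ) * ((j : ℂ) + 1 - (r : ℂ)) - 2 * (m : ℂ) + (k : ℂ)) ^ 2 /
                    (8 * (m : ℂ))) *
                (Complex.exp (Real.pi * Complex.I *
                      (4 * (m : ℂ) * (r : ℂ) + 2 * (m : ℂ) - (k : ℂ)) * (z1 - z2)) *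
                    qpow τ (-(4 * (m : ℂ) * (r : ℂ) + 2 * (m : ℂ) - (k : ℂ)) / 2) +
                  Complex.exp (-(Real.pi * Complex.I) *
                      (4 * (m : ℂ) * (r : ℂ) + 2 * (m : ℂ) - (k : ℂ)) * (z1 - z2)) *
                    qpow τ ((4 * (m : ℂ) * (r : ℂ) + 2 * (m : ℂ) - (k : ℂ)) / 2)) *
                (jTheta (k : ℂ) (2 * (m : ℂ)) τ (z1 + z2) -
                  jTheta (-(k : ℂ)) (2 * (m : ℂ)) τ (z1 + z2))) +
        jThetaM (-(2 * (m : ℂ))) (2 * (m : ℂ) + 1) τ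
            (2 * (m : ℂ) * (z1 - z2) / (2 * (m : ℂ) + 1)) *
          ∑ k ∈ Finset.Icc 1 n,
            e2 ((k : ℂ) * (z1 - z2)) * qpow τ (-((k : ℂ) ^ 2) / (2 * (m : ℂ))) *
              (jTheta (k : ℂ) (m : ℂ) (2 * τ) (2 * z1 + 2 * z2) -
                jTheta (-(k : ℂ)) (m : ℂ) (2 * τ) (2 * z1 + 2 * z2)) := by
  have hmc : (m:ℂ) = (2*n+1)/2 := by rw [hm]; push_cast; ring
  have h2m : 2 * (m:ℂ) = 2*n+1 := by rw [hmc]; ring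
  have hM : (2*n+1:ℂ)+1 = 2*n+2 := by ring
  have g1 : ∀ j : ℤ, 1 - e2 ((z1+z2) + (z1-z2) + 2 * j * τ) ≠ 0 := by
    intro j
    have := e2_ne_one τ (2*z1) h1 j
    rwa [show (z1+z2) + (z1-z2) = 2*z1 by ring]
  have g2 : ∀ j : ℤ, 1 - e2 (-(z1+z2) + (z1-z2) + 2 * j * τ) ≠ 0 := by
    intro j
    have := e2_ne_one τ (-(2*z2)) (inLattice_neg _ _ h2) j
    rwa [show -(z1+z2) + (z1-z2) = -(2*z2) by ring]
  have key := main_E τ (z1+z2) (z1-z2) hτ n g1 g2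
  have k1 := eta_div τ _ hτ g1
  have k2 := eta_div τ _ hτ g2
  have k3 := J_C τ (z1+z2) (z1-z2) n
  have k4 := J_C τ (-(z1+z2)) (z1-z2) n
  rw [show (z1+z2) + (z1-z2) = 2*z1 by ring] at k1 k3 key
  rw [show -(z1+z2) + (z1-z2) = -(2*z2) by ring] at k2 k4 key
  rw [mumford_neg] at k2
  have S1 := tsum_mul_left (L := SummationFilter.unconditional ℕ) (a := qpow τ (-(m : ℂ) / (2 * (2 * (m : ℂ) + 1))) *
          e2 ((m : ℂ) * (z1 - z2) / (2 * (m : ℂ) + 1))) (f := fun j : ℕ => ∑ r ∈ Finset.Icc 1 (j + 1),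
            ∑ k ∈ (Finset.range (2 * n + 1)).filter (fun k => Even k),
              (-1 : ℂ) ^ (j + 1) *
                qpow τ ((2 * (m : ℂ) + 1) * ((j : ℂ) + 1) ^ 2 -
                  (4 * (m : ℂ) * ((j : ℂ) + 1 - (r : ℂ)) + 2 * (m : ℂ) - (k : ℂ)) ^ 2 /
                    (8 * (m : ℂ))) *
                (Complex.exp (Real.pi * Complex.I *
                      (4 * (m : ℂ) * (r : ℂ) - 2 * (m : ℂ) + (k : ℂ)) * (z1 - z2)) *
                    qpow τ (-(4 * (m : ℂ) * (r : ℂ) - 2 * (m : ℂ) + (k : ℂ)) / 2) +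
                  Complex.exp (-(Real.pi * Complex.I) *
                      (4 * (m : ℂ) * (r : ℂ) - 2 * (m : ℂ) + (k : ℂ)) * (z1 - z2)) *
                    qpow τ ((4 * (m : ℂ) * (r : ℂ) - 2 * (m : ℂ) + (k : ℂ)) / 2)) *
                (jTheta (k : ℂ) (2 * (m : ℂ)) τ (z1 + z2) -
                  jTheta (-(k : ℂ)) (2 * (m : ℂ)) τ (z1 + z2)))
  have S2 := tsum_mul_left (L := SummationFilter.unconditional ℕ) (a := qpow τ (-(m : ℂ) / (2 * (2 * (m : ℂ) + 1))) *
          e2 ((m : ℂ) * (z1 - z2) / (2 * (m : ℂ) + 1))) (f := fun j : ℕ => ∑ r ∈ Finset.range (j + 1),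
            ∑ k ∈ (Finset.range (2 * n + 1)).filter (fun k => Even k),
              (-1 : ℂ) ^ (j + 1) *
                qpow τ ((2 * (m : ℂ) + 1) * ((j : ℂ) + 1) ^ 2 -
                  (4 * (m : ℂ) * ((j : ℂ) + 1 - (r : ℂ)) - 2 * (m : ℂ) + (k : ℂ)) ^ 2 /
                    (8 * (m : ℂ))) *
                (Complex.exp (Real.pi * Complex.I *
                      (4 * (m : ℂ) * (r : ℂ) + 2 * (m : ℂ) - (k : ℂ)) * (z1 - z2)) *
                    qpow τ (-(4 * (m : ℂ) * (r : ℂ) + 2 * (m : ℂ) - (k : ℂ)) / 2) +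
                  Complex.exp (-(Real.pi * Complex.I) *
                      (4 * (m : ℂ) * (r : ℂ) + 2 * (m : ℂ) - (k : ℂ)) * (z1 - z2)) *
                    qpow τ ((4 * (m : ℂ) * (r : ℂ) + 2 * (m : ℂ) - (k : ℂ)) / 2)) *
                (jTheta (k : ℂ) (2 * (m : ℂ)) τ (z1 + z2) -
                  jTheta (-(k : ℂ)) (2 * (m : ℂ)) τ (z1 + z2)))
  have dp : ∀ κ : ℕ, jTheta ((2*κ:ℕ) : ℂ) (2 * (m : ℂ)) τ (z1 + z2) -
                  jTheta (-((2*κ:ℕ) : ℂ)) (2 * (m : ℂ)) τ (z1 + z2) = Dp τ (z1+z2) n κ := by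
    intro κ
    rw [Dp, ← jTheta2, ← jTheta2, h2m]
    congr 2 <;> (push_cast; ring)
  have R1 := S1.symm.trans (b := _) (c := Cc τ (z1-z2) n * ∑' j : ℕ, ∑ r ∈ Finset.range (j+1), ∑ κ ∈ Finset.range (n+1),
       (Hh τ (z1-z2) n ((2*n+1)*(r+1) + κ) (j+1) + Hh τ (z1-z2) n (-((2*n+1)*r) + -κ) (-(j+1))) * Dp τ (z1+z2) n κ) (by
    rw [← tsum_mul_left]
    congr 1; funext j
    rw [sum_Icc_shift, Finset.mul_sum, Finset.mul_sum]
    apply Finset.sum_congr rfl; intro r _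
    rw [sum_even, Finset.mul_sum, Finset.mul_sum]
    apply Finset.sum_congr rfl; intro κ _
    rw [dp, ← mul_assoc, ← mul_assoc (Cc _ _ _)]
    congr 1
    exact term1 τ (z1-z2) n j r κ m hmc _ _ rfl rfl)
  have R2 := S2.symm.trans (b := _) (c := Cc τ (z1-z2) n * ∑' j : ℕ, ∑ r ∈ Finset.range (j+1), ∑ κ ∈ Finset.range (n+1),
       (Hh τ (z1-z2) n ((2*n+1)*(r+1) + -κ) (j+1) + Hh τ (z1-z2) n (-((2*n+1)*r) + κ) (-(j+1))) * Dp τ (z1+z2) n κ) (by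
    rw [← tsum_mul_left]
    congr 1; funext j
    rw [Finset.mul_sum, Finset.mul_sum]
    apply Finset.sum_congr rfl; intro r _
    rw [sum_even, Finset.mul_sum, Finset.mul_sum]
    apply Finset.sum_congr rfl; intro κ _
    rw [dp, ← mul_assoc, ← mul_assoc (Cc _ _ _)]
    congr 1
    exact term2 τ (z1-z2) n j r κ m hmc _ _ rfl rfl)
  rw [R1, R2]
  clear R1 R2 S1 S2
  have R3 : ∑ k ∈ Finset.Icc 1 n,
            e2 ((k : ℂ) * (z1 - z2)) * qpow τ (-((k : ℂ) ^ 2) / (2 * (m : ℂ))) *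
              (jTheta (k : ℂ) (m : ℂ) (2 * τ) (2 * z1 + 2 * z2) -
                jTheta (-(k : ℂ)) (m : ℂ) (2 * τ) (2 * z1 + 2 * z2)) =
      ∑ κ ∈ Finset.Icc 1 n, e2 (κ * (z1-z2) - τ * (κ^2/(2*n+1))) * Dp τ (z1+z2) n κ := by
    apply Finset.sum_congr rfl; intro κ _
    rw [qpow_eq, e2_mul, h2m, Dp, ← jTheta1, ← jTheta1, hmc, ← mul_add]
    congr 1
    · congr 1; ring
    · push_cast; rfl
  rw [R3, h2m, hM, hmc, Phi_eq, jThetaM_T,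
    show (z1 - z2)/(2*n+2:ℂ) + z1 + z2 = (z1-z2)/(2*n+2) + (z1+z2) by ring,
    show (z1 - z2)/(2*n+2:ℂ) - z1 - z2 = (z1-z2)/(2*n+2) + -(z1+z2) by ring]
  have k2' : -Complex.I * eta (2*τ)^3 / mumford 1 1 (2*τ) (2*z2) = -(e2 (-(2*z2)/2) * Pf τ (-(2*z2))) := by
    rw [← k2, div_neg, neg_neg]
  linear_combination Cc τ (z1-z2) n * key -
    k1 * jThetaM (2*n+1) (2*n+2) τ ((z1-z2)/(2*n+2) + (z1+z2)) - k3 * Pf τ (2*z1) -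
    k2' * jThetaM (2*n+1) (2*n+2) τ ((z1-z2)/(2*n+2) + -(z1+z2)) + k4 * Pf τ (-(2*z2))

end Wakimoto
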